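/- arXiv:1801.00139 — 4 statements merged into one kernel-verified Lean document; each statement's English description precedes it below -/
import Mathlib

section
/- There exists a sequence f_{1,∞} = (f_1, f_2, …) of surjective continuous maps from I = [0,1] to itself that converges uniformly to a continuous map f: I → I, such that the nonautonomous system (I, f_{1,∞}) is Li-Yorke chaotic while h_S(f_{1,∞}) = 0 for every strictly increasing sequence S of positive integers. -/
/-!
Run the flow `x ↦ x ^ exp t` of `[0,1]`, all of whose orbits except `{1}` tend to `0` as `t → ∞`,
along a sequence of times `u 0 = 0, u 1, u 2, …`, so that the `n`-th iterate is the time-`u n` map.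
If `u (n + 1) - u n → 0`, the maps converge uniformly to the identity. If moreover `u` is `0`
infinitely often and is unbounded above, then any two points of `[0,1)` are infinitely often back at
their initial distance and infinitely often arbitrarily close, so `[0,1)` is scrambled.

All iterates are monotone, which caps the growth of separated sets: for monotone `g₁, …, gₙ` each
`|gⱼ x - gⱼ y|` is at most `|∑ gᵢ x - ∑ gᵢ y|`, so the sum maps a separated set to an
`ε`-separated subset of `[0, n]`. Linear growth of cardinality kills the sequence entropy.
-/

open Filter Topology

noncomputable section

/-- The unit interval `[0,1]` as a type. -/
abbrev UI : Type := unitInterval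

/-- Iterates of a nonautonomous system: `trajN f n = f_n ∘ ⋯ ∘ f_1` (0-indexed sequence). -/
def trajN (f : ℕ → UI → UI) : ℕ → UI → UI
  | 0 => id
  | n + 1 => f n ∘ trajN f n

/-- `x, y` form a Li-Yorke pair for the nonautonomous system `f`. -/
def IsLYPair (f : ℕ → UI → UI) (x y : UI) : Prop :=
  0 < Filter.limsup (fun n => dist (trajN f n x) (trajN f n y)) Filter.atTop ∧
    Filter.liminf (fun n => dist (trajN f n x) (trajN f n y)) Filter.atTop = 0

/-- The nonautonomous system `f` is Li-Yorke chaotic: there is an uncountable scrambled set. -/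
def LiYorkeChaotic (f : ℕ → UI → UI) : Prop :=
  ∃ S : Set UI, ¬ S.Countable ∧ ∀ x ∈ S, ∀ y ∈ S, x ≠ y → IsLYPair f x y

/-- `E` is an `(n, ε, A)`-separated set for the nonautonomous system `f`. -/
def IsSepSet (f : ℕ → UI → UI) (A : ℕ → ℕ) (n : ℕ) (ε : ℝ) (E : Set UI) : Prop :=
  ∀ x ∈ E, ∀ y ∈ E, x ≠ y → ∃ j < n, ε < dist (trajN f (A j) x) (trajN f (A j) y)

/-- Maximal cardinality of an `(n, ε, A)`-separated set. -/
def sepNum (f : ℕ → UI → UI) (A : ℕ → ℕ) (n : ℕ) (ε : ℝ) : ℕ :=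
  sSup {m : ℕ | ∃ E : Finset UI, E.card = m ∧ IsSepSet f A n ε ↑E}

/-- Topological sequence entropy of the nonautonomous system `f` with respect to the
increasing sequence `A` (the limit as `ε → 0⁺` is realized as a supremum over `ε > 0`,
since the inner quantity is antitone in `ε`). -/
def seqEntropy (f : ℕ → UI → UI) (A : ℕ → ℕ) : EReal :=
  ⨆ ε ∈ Set.Ioi (0 : ℝ),
    Filter.limsup
      (fun n => ((Real.log (sepNum f A n ε) / (A (n - 1) : ℝ) : ℝ) : EReal)) Filter.atTop

/-- `E` is an `(n, ε)`-separated set for the nonautonomous system `f`. -/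
def IsSepSetT (f : ℕ → UI → UI) (n : ℕ) (ε : ℝ) (E : Set UI) : Prop :=
  ∀ x ∈ E, ∀ y ∈ E, x ≠ y → ∃ j < n, ε < dist (trajN f j x) (trajN f j y)

/-- Maximal cardinality of an `(n, ε)`-separated set. -/
def sepNumT (f : ℕ → UI → UI) (n : ℕ) (ε : ℝ) : ℕ :=
  sSup {m : ℕ | ∃ E : Finset UI, E.card = m ∧ IsSepSetT f n ε ↑E}

/-- Topological entropy of the nonautonomous system `f` (the limit as `ε → 0⁺` is realized
as a supremum over `ε > 0`, since the inner quantity is antitone in `ε`). -/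
def topEntropyNDS (f : ℕ → UI → UI) : EReal :=
  ⨆ ε ∈ Set.Ioi (0 : ℝ),
    Filter.limsup (fun n => ((Real.log (sepNumT f n ε) / (n : ℝ) : ℝ) : EReal)) Filter.atTop

section Flow

variable {τ α : Type*} [AddGroup τ]

/-- The nonautonomous system that runs the flow `φ` along the times `u 0, u 1, …`: its `n`-th map
is the time-`(u (n + 1) - u n)` map of `φ`. -/
def flowSystem [TopologicalSpace τ] [TopologicalSpace α] (φ : Flow τ α) (u : ℕ → τ) (n : ℕ) :
    α → α :=
  φ (u (n + 1) - u n)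

theorem surjective_flowSystem [TopologicalSpace τ] [TopologicalSpace α] (φ : Flow τ α) (u : ℕ → τ)
    (n : ℕ) : Function.Surjective (flowSystem φ u n) := fun x =>
  ⟨φ (-(u (n + 1) - u n)) x, by
    rw [flowSystem, ← φ.map_add, add_neg_cancel, φ.map_zero_apply]⟩

theorem tendstoUniformly_flowSystem [UniformSpace τ] [WeaklyLocallyCompactSpace τ]
    [UniformSpace α] [CompactSpace α] (φ : Flow τ α) {u : ℕ → τ}
    (hu : Tendsto (fun n => u (n + 1) - u n) atTop (𝓝 0)) :
    TendstoUniformly (flowSystem φ u) id atTop := by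
  have hφ := Continuous.tendstoUniformly φ.toFun φ.cont' 0
  rw [φ.map_zero] at hφ
  exact fun V hV => hu.eventually (hφ V hV)

theorem trajN_flowSystem [TopologicalSpace τ] (φ : Flow τ UI) (u : ℕ → τ) (n : ℕ) :
    trajN (flowSystem φ u) n = φ (u n - u 0) := by
  induction n with
  | zero => rw [sub_self, φ.map_zero, trajN]
  | succ n ih =>
    funext x
    rw [trajN, Function.comp_apply, ih, flowSystem, ← φ.map_add, sub_add_sub_cancel]

end Flow

section LiYorke

theorem isLYPair_of_frequently {f : ℕ → UI → UI} {x y : UI} {δ : ℝ} (hδ : 0 < δ)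
    (hfar : ∃ᶠ n in atTop, δ ≤ dist (trajN f n x) (trajN f n y))
    (hclose : ∀ ε > 0, ∃ᶠ n in atTop, dist (trajN f n x) (trajN f n y) ≤ ε) :
    IsLYPair f x y := by
  have hle : IsBoundedUnder (· ≤ ·) atTop fun n => dist (trajN f n x) (trajN f n y) :=
    isBoundedUnder_of ⟨1, fun n => Real.dist_le_of_mem_Icc_01 (trajN f n x).2 (trajN f n y).2⟩
  have hge : IsBoundedUnder (· ≥ ·) atTop fun n => dist (trajN f n x) (trajN f n y) :=
    isBoundedUnder_of ⟨0, fun _ => dist_nonneg⟩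
  refine ⟨hδ.trans_le (le_limsup_of_frequently_le hfar hle), le_antisymm ?_ ?_⟩
  · exact le_of_forall_pos_le_add fun ε hε =>
      (liminf_le_of_frequently_le (hclose ε hε) hge).trans_eq (zero_add ε).symm
  · exact le_liminf_of_le hle.isCoboundedUnder_ge (.of_forall fun _ => dist_nonneg)

theorem isLYPair_flowSystem {φ : Flow ℝ UI} {u : ℕ → ℝ} {x y p : UI} (hxy : x ≠ y)
    (hreturn : ∃ᶠ n in atTop, u n = u 0) (hunbounded : ∀ C, ∃ᶠ n in atTop, C ≤ u n)
    (hx : Tendsto (fun t => φ t x) atTop (𝓝 p)) (hy : Tendsto (fun t => φ t y) atTop (𝓝 p)) :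
    IsLYPair (flowSystem φ u) x y := by
  refine isLYPair_of_frequently (dist_pos.2 hxy) ?_ fun ε hε => ?_
  · refine hreturn.mono fun n hn => ?_
    rw [trajN_flowSystem, hn, sub_self, φ.map_zero, id, id]
  · have hdist : Tendsto (fun t => dist (φ t x) (φ t y)) atTop (𝓝 0) := by
      simpa only [dist_self] using hx.dist hy
    obtain ⟨T, hT⟩ := eventually_atTop.1 (hdist.eventually (ge_mem_nhds hε))
    refine (hunbounded (T + u 0)).mono fun n hn => ?_
    rw [trajN_flowSystem]
    exact hT _ (le_sub_iff_add_le.2 hn)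

end LiYorke

section MonotoneEntropy

theorem card_le_floor_div_of_separated {α : Type*} {E : Finset α} {F : α → ℝ} {L ε : ℝ}
    (hε : 0 < ε) (hF : ∀ x ∈ E, F x ∈ Set.Icc 0 L)
    (hsep : ∀ x ∈ E, ∀ y ∈ E, x ≠ y → ε < dist (F x) (F y)) :
    E.card ≤ ⌊L / ε⌋₊ + 1 := by
  have hmaps : Set.MapsTo (fun x => ⌊F x / ε⌋₊) E (Finset.range (⌊L / ε⌋₊ + 1)) := fun x hx => by
    rw [Finset.mem_coe, Finset.mem_range, Nat.lt_succ_iff]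
    exact Nat.floor_le_floor (div_le_div_of_nonneg_right (hF x hx).2 hε.le)
  have hinj : Set.InjOn (fun x => ⌊F x / ε⌋₊) E := fun x hx y hy hfloor => by
    by_contra hne
    have hlt : |F x / ε - F y / ε| < 1 := by
      apply Int.abs_sub_lt_one_of_floor_eq_floor
      rw [← Int.natCast_floor_eq_floor (div_nonneg (hF x hx).1 hε.le),
        ← Int.natCast_floor_eq_floor (div_nonneg (hF y hy).1 hε.le)]
      exact congrArg Nat.cast hfloor
    rw [← sub_div, abs_div, abs_of_pos hε, div_lt_one hε] at hlt
    exact (hsep x hx y hy hne).not_gt hlt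
  simpa only [Finset.card_range] using Finset.card_le_card_of_injOn _ hmaps hinj

theorem dist_le_dist_sum_of_monotone {ι α : Type*} [LinearOrder α] {s : Finset ι}
    {g : ι → α → ℝ} (hg : ∀ i ∈ s, Monotone (g i)) {j : ι} (hj : j ∈ s) (x y : α) :
    dist (g j x) (g j y) ≤ dist (∑ i ∈ s, g i x) (∑ i ∈ s, g i y) := by
  wlog hxy : x ≤ y generalizing x y
  · simpa only [dist_comm] using this y x (le_of_not_ge hxy)
  have hincr : ∀ i ∈ s, 0 ≤ g i y - g i x := fun i hi => sub_nonneg.2 (hg i hi hxy)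
  rw [dist_comm, dist_comm (∑ i ∈ s, g i x), Real.dist_eq, Real.dist_eq, ← Finset.sum_sub_distrib,
    abs_of_nonneg (hincr j hj), abs_of_nonneg (Finset.sum_nonneg hincr)]
  exact Finset.single_le_sum hincr hj

theorem monotone_trajN {f : ℕ → UI → UI} (hf : ∀ n, Monotone (f n)) (n : ℕ) :
    Monotone (trajN f n) := by
  induction n with
  | zero => exact monotone_id
  | succ n ih => exact (hf n).comp ih

theorem sepNum_le_of_monotone {f : ℕ → UI → UI} (hf : ∀ n, Monotone (f n)) (A : ℕ → ℕ) (n : ℕ)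
    {ε : ℝ} (hε : 0 < ε) : sepNum f A n ε ≤ ⌊n / ε⌋₊ + 1 := by
  refine csSup_le' ?_
  rintro _ ⟨E, rfl, hE⟩
  refine card_le_floor_div_of_separated
    (F := fun x => ∑ j ∈ Finset.range n, (trajN f (A j) x : ℝ)) hε (fun x _ => ⟨?_, ?_⟩) ?_
  · exact Finset.sum_nonneg fun j _ => (trajN f (A j) x).2.1
  · simpa using Finset.sum_le_card_nsmul (Finset.range n) _ 1 fun j _ => (trajN f (A j) x).2.2
  · intro x hx y hy hxy
    obtain ⟨j, hj, hd⟩ := hE x hx y hy hxy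
    exact hd.trans_le <| dist_le_dist_sum_of_monotone (g := fun j x => (trajN f (A j) x : ℝ))
      (fun i _ => monotone_trajN hf (A i)) (Finset.mem_range.2 hj) x y

theorem isBigO_sepNum_of_monotone {f : ℕ → UI → UI} (hf : ∀ n, Monotone (f n)) (A : ℕ → ℕ)
    {ε : ℝ} (hε : 0 < ε) : (fun n => (sepNum f A n ε : ℝ)) =O[atTop] fun n => (n : ℝ) := by
  refine .of_bound (1 / ε + 1) ?_
  filter_upwards [eventually_ge_atTop 1] with n hn
  rw [Real.norm_natCast, Real.norm_natCast]
  calc (sepNum f A n ε : ℝ) ≤ ⌊n / ε⌋₊ + 1 := mod_cast sepNum_le_of_monotone hf A n hε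
    _ ≤ n / ε + n := add_le_add (Nat.floor_le (by positivity)) (mod_cast hn)
    _ = (1 / ε + 1) * n := by ring

theorem isLittleO_log_natCast_of_isBigO {a : ℕ → ℕ}
    (ha : (fun n => (a n : ℝ)) =O[atTop] fun n => (n : ℝ)) :
    (fun n => Real.log (a n)) =o[atTop] fun n => (n : ℝ) := by
  -- Adding `n` makes the argument of the logarithm diverge, whatever `a` does.
  have hdiverge : Tendsto (fun n => (a n : ℝ) + n) atTop atTop :=
    tendsto_atTop_mono (fun n => le_add_of_nonneg_left (a n).cast_nonneg)
      tendsto_natCast_atTop_atTop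
  have hlog_le : (fun n => Real.log (a n)) =O[atTop] fun n => Real.log (a n + n) := by
    refine .of_norm_le fun n => ?_
    rw [Real.norm_of_nonneg (Real.log_natCast_nonneg _), ← Nat.cast_add]
    rcases (a n).eq_zero_or_pos with h0 | hpos
    · rw [h0, Nat.cast_zero, Real.log_zero]
      exact Real.log_natCast_nonneg _
    · exact Real.log_le_log (mod_cast hpos) (mod_cast Nat.le_add_right _ _)
  exact (hlog_le.trans_isLittleO (Real.isLittleO_log_id_atTop.comp_tendsto hdiverge)).trans_isBigO
    (ha.add (Asymptotics.isBigO_refl _ _))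

theorem isBigO_natCast_comp_pred_of_strictMono {A : ℕ → ℕ} (hA : StrictMono A) :
    (fun n : ℕ => (n : ℝ)) =O[atTop] fun n => (A (n - 1) : ℝ) := by
  refine .of_bound 2 ?_
  filter_upwards [eventually_ge_atTop 2] with n hn
  have hle : n - 1 ≤ A (n - 1) := hA.le_apply
  rw [Real.norm_natCast, Real.norm_natCast]
  exact_mod_cast (by omega : n ≤ 2 * A (n - 1))

theorem seqEntropy_eq_zero_of_isBigO {f : ℕ → UI → UI} {A : ℕ → ℕ} (hA : StrictMono A)
    (hsep : ∀ ε > 0, (fun n => (sepNum f A n ε : ℝ)) =O[atTop] fun n => (n : ℝ)) :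
    seqEntropy f A = 0 := by
  have hlimsup : ∀ ε ∈ Set.Ioi (0 : ℝ), limsup
      (fun n => ((Real.log (sepNum f A n ε) / (A (n - 1) : ℝ) : ℝ) : EReal)) atTop = 0 :=
    fun ε hε => Tendsto.limsup_eq <| EReal.tendsto_coe.2 <|
      ((isLittleO_log_natCast_of_isBigO (hsep ε hε)).trans_isBigO
        (isBigO_natCast_comp_pred_of_strictMono hA)).tendsto_div_nhds_zero
  rw [seqEntropy, biSup_congr hlimsup]
  exact biSup_const Set.nonempty_Ioi

theorem seqEntropy_eq_zero_of_monotone {f : ℕ → UI → UI} (hf : ∀ n, Monotone (f n)) {A : ℕ → ℕ}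
    (hA : StrictMono A) : seqEntropy f A = 0 :=
  seqEntropy_eq_zero_of_isBigO hA fun _ hε => isBigO_sepNum_of_monotone hf A hε

end MonotoneEntropy

section PowerFlow

/-- The flow `(t, x) ↦ x ^ exp t` on `[0,1]`; the exponential turns composition of powers into
addition of times. -/
def powerFlow : Flow ℝ UI where
  toFun t x := ⟨(x : ℝ) ^ Real.exp t, Real.rpow_nonneg x.2.1 _,
    Real.rpow_le_one x.2.1 x.2.2 (Real.exp_pos t).le⟩
  cont' := by
    refine .subtype_mk (.rpow ?_ ?_ fun _ => .inr (Real.exp_pos _)) _ <;> fun_prop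
  map_add' s t x := Subtype.ext <| by
    simp only [← Real.rpow_mul x.2.1, ← Real.exp_add, add_comm]
  map_zero' x := Subtype.ext <| by simp only [Real.exp_zero, Real.rpow_one]

theorem coe_powerFlow (t : ℝ) (x : UI) : (powerFlow t x : ℝ) = (x : ℝ) ^ Real.exp t := rfl

theorem monotone_powerFlow (t : ℝ) : Monotone (powerFlow t) := fun x y hxy => by
  rw [← Subtype.coe_le_coe, coe_powerFlow, coe_powerFlow]
  exact Real.rpow_le_rpow x.2.1 hxy (Real.exp_pos t).le

theorem tendsto_powerFlow_atTop {x : UI} (hx : x < 1) :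
    Tendsto (fun t => powerFlow t x) atTop (𝓝 0) := by
  simp only [tendsto_subtype_rng, coe_powerFlow]
  exact (tendsto_rpow_atTop_of_base_lt_one (x : ℝ) (neg_one_lt_zero.trans_le x.2.1) hx).comp
    Real.tendsto_exp_atTop

end PowerFlow

section Times

theorem tendsto_sqrt_natCast_succ_sub_sqrt :
    Tendsto (fun n : ℕ => √((n + 1 : ℕ) : ℝ) - √n) atTop (𝓝 0) := by
  have hsqrt : Tendsto (fun n : ℕ => √(n : ℝ)) atTop atTop :=
    Real.tendsto_sqrt_atTop.comp tendsto_natCast_atTop_atTop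
  have hsum : Tendsto (fun n : ℕ => √((n + 1 : ℕ) : ℝ) + √n) atTop atTop :=
    (hsqrt.comp (tendsto_add_atTop_nat 1)).atTop_add_atTop hsqrt
  refine (tendsto_inv_atTop_zero.comp hsum).congr fun n => ?_
  refine inv_eq_of_mul_eq_one_right ?_
  rw [← sq_sub_sq, Real.sq_sqrt (by positivity), Real.sq_sqrt (by positivity)]
  push_cast
  ring

theorem tendsto_sub_of_uniformContinuous {ι G H : Type*} [AddGroup G] [UniformSpace G]
    [IsUniformAddGroup G] [AddGroup H] [UniformSpace H] [IsUniformAddGroup H] {g : G → H}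
    (hg : UniformContinuous g) {l : Filter ι} {a b : ι → G}
    (hab : Tendsto (fun i => b i - a i) l (𝓝 0)) :
    Tendsto (fun i => g (b i) - g (a i)) l (𝓝 0) := by
  have huniformity : Tendsto (fun i => (a i, b i)) l (uniformity G) := by
    rwa [uniformity_eq_comap_nhds_zero, tendsto_comap_iff]
  have himage := Tendsto.comp hg huniformity
  rwa [uniformity_eq_comap_nhds_zero, tendsto_comap_iff] at himage

/-- The distance from `√n` to the set of perfect squares. As a sequence of times it moves ever more
slowly, while the growing gaps between squares let it make ever longer excursions from `0`. -/
def sqrtDistToSquares (n : ℕ) : ℝ :=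
  Metric.infDist √n (Set.range fun k : ℕ => (k : ℝ) ^ 2)

theorem tendsto_sqrtDistToSquares_succ_sub :
    Tendsto (fun n => sqrtDistToSquares (n + 1) - sqrtDistToSquares n) atTop (𝓝 0) :=
  tendsto_sub_of_uniformContinuous (Metric.uniformContinuous_infDist_pt _)
    tendsto_sqrt_natCast_succ_sub_sqrt

theorem sqrtDistToSquares_pow_four (k : ℕ) : sqrtDistToSquares (k ^ 4) = 0 := by
  refine Metric.infDist_zero_of_mem ⟨k, ?_⟩
  rw [Nat.cast_pow, show (k : ℝ) ^ 4 = ((k : ℝ) ^ 2) ^ 2 by ring, Real.sqrt_sq (by positivity)]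

theorem le_sqrtDistToSquares (k : ℕ) : (k : ℝ) ≤ sqrtDistToSquares ((k ^ 2 + k) ^ 2) := by
  rw [sqrtDistToSquares, Nat.cast_pow, Real.sqrt_sq (by positivity),
    Metric.le_infDist (Set.range_nonempty _)]
  rintro _ ⟨j, rfl⟩
  rw [Real.dist_eq, le_abs']
  push_cast
  rcases le_or_gt j k with hjk | hkj
  · right
    have : (j : ℝ) ^ 2 ≤ (k : ℝ) ^ 2 := by gcongr
    linarith
  · left
    have : ((k : ℝ) + 1) ^ 2 ≤ (j : ℝ) ^ 2 := by gcongr; exact_mod_cast hkj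
    linarith

theorem frequently_sqrtDistToSquares_eq_zero : ∃ᶠ n in atTop, sqrtDistToSquares n = 0 :=
  frequently_atTop.2 fun N =>
    ⟨N ^ 4, Nat.le_self_pow four_ne_zero N, sqrtDistToSquares_pow_four N⟩

theorem frequently_le_sqrtDistToSquares (C : ℝ) : ∃ᶠ n in atTop, C ≤ sqrtDistToSquares n := by
  refine frequently_atTop.2 fun N => ?_
  obtain ⟨k, hk⟩ := exists_nat_ge (max C N)
  refine ⟨(k ^ 2 + k) ^ 2, ?_, ((le_max_left _ _).trans hk).trans (le_sqrtDistToSquares k)⟩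
  calc N ≤ k := mod_cast (le_max_right C N).trans hk
    _ ≤ k ^ 2 + k := Nat.le_add_left _ _
    _ ≤ (k ^ 2 + k) ^ 2 := Nat.le_self_pow two_ne_zero _

end Times

theorem not_countable_Iio_one : ¬ (Set.Iio (1 : UI)).Countable := fun h => by
  simpa using h.measure_zero MeasureTheory.volume

theorem liYorkeChaotic_flowSystem_powerFlow {u : ℕ → ℝ}
    (hreturn : ∃ᶠ n in atTop, u n = u 0) (hunbounded : ∀ C, ∃ᶠ n in atTop, C ≤ u n) :
    LiYorkeChaotic (flowSystem powerFlow u) :=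
  ⟨Set.Iio 1, not_countable_Iio_one, fun _ hx _ hy hxy =>
    isLYPair_flowSystem hxy hreturn hunbounded
      (tendsto_powerFlow_atTop hx) (tendsto_powerFlow_atTop hy)⟩

/-- There is a uniformly convergent nonautonomous system of surjective continuous interval
maps which is Li-Yorke chaotic but has zero topological sequence entropy with respect to
every strictly increasing sequence of positive integers. -/
theorem exists_nds_uniform_liYorke_zeroSeqEntropy :
    ∃ f : ℕ → UI → UI,
      (∀ n, Continuous (f n)) ∧ (∀ n, Function.Surjective (f n)) ∧
      (∃ g : UI → UI, Continuous g ∧ TendstoUniformly f g Filter.atTop) ∧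
      LiYorkeChaotic f ∧
      (∀ A : ℕ → ℕ, StrictMono A → (∀ n, 0 < A n) → seqEntropy f A = 0) := by
  have hzero : sqrtDistToSquares 0 = 0 := sqrtDistToSquares_pow_four 0
  refine ⟨flowSystem powerFlow sqrtDistToSquares, fun n => powerFlow.continuous_toFun _,
    surjective_flowSystem powerFlow _, ⟨id, continuous_id, ?_⟩, ?_, fun A hA _ => ?_⟩
  · exact tendstoUniformly_flowSystem powerFlow tendsto_sqrtDistToSquares_succ_sub
  · refine liYorkeChaotic_flowSystem_powerFlow ?_ frequently_le_sqrtDistToSquares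
    simpa only [hzero] using frequently_sqrtDistToSquares_eq_zero
  · exact seqEntropy_eq_zero_of_monotone (fun n => monotone_powerFlow _) hA
end
end

section
/- There exists a surjective continuous map f: [0,1] → [0,1] such that: (1) f has zero topological entropy; (2) f has exactly one infinite ω-limit set ω̃, and ω̃ is homeomorphic to the Cantor set with f restricted to ω̃ minimal; (3) f is not Li-Yorke chaotic; and (4) there is a family {G_n}_{n∈ℤ} of pairwise disjoint nondegenerate compact subintervals of (0,1) with f(G_n) = G_{n+1} for every n ∈ ℤ. -/
open Filter Topology

noncomputable section

/-- The ω-limit set of `x` under `f`: the set of limit points of the sequence `(f^n x)`. -/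
def omegaSet (f : UI → UI) (x : UI) : Set UI :=
  {y | MapClusterPt y Filter.atTop fun n => f^[n] x}

/-!
Call a continuous `f : [0,1] → [0,1]` period doubling if on the left third it is a copy of itself
rescaled onto the right third, if it translates the right third back onto the left one, and if it is
antitone on the middle third. Then `f²` on each outer third is a rescaled copy of `f`, so the pieces
of each stage of the Cantor construction are permuted cyclically. On an orbit that stays in the
middle third `f²` is monotone, so such an orbit converges to a periodic one; by self-similarity
every orbit either does this at some scale or is eventually trapped in every stage of the Cantor
set, and then its ω-limit set is the Cantor set. Points of one stage lie in the same piece forever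
or in different pieces forever, whence proximal pairs are asymptotic and there is no Li-Yorke pair.
The entropy vanishes because an antitone branch has only linearly many orbits at a given precision,
so that orbits are coded by polynomially many colours.

All this leaves open which antitone map is used on the middle third. Making it `s ↦ -s * |s|` around
the fixed point `1 / 2` squares the relative distance to that point at each step, so a short
interval of relative distances yields a full orbit, indexed by `ℤ`, of pairwise disjoint
intervals.
-/

section Pairs

variable {X : Type*}

/-- The orbits of `x` and `y` converge to each other. -/
def AsymptoticPair [PseudoMetricSpace X] (f : X → X) (x y : X) : Prop :=
  Tendsto (fun n => dist (f^[n] x) (f^[n] y)) atTop (𝓝 0)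

/-- The orbits of `x` and `y` come arbitrarily close to each other at arbitrarily late times. -/
def ProximalPair [PseudoMetricSpace X] (f : X → X) (x y : X) : Prop :=
  MapClusterPt 0 atTop fun n => dist (f^[n] x) (f^[n] y)

/-- The orbit of `x` converges to the orbit of a periodic point. -/
def AsymptoticallyPeriodic [PseudoMetricSpace X] (f : X → X) (x : X) : Prop :=
  ∃ z ∈ Function.periodicPts f, AsymptoticPair f x z

lemma exists_eventually_iterate_eq_of_mem_periodicPts {f : X → X} {z : X}
    (hz : z ∈ Function.periodicPts f) (U : Ultrafilter ℕ) :
    ∃ m, ∀ᶠ n in U, f^[n] z = f^[m] z := by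
  obtain ⟨p, hp, hz⟩ := hz
  have hmod : ∀ᶠ n in (U : Filter ℕ), ∃ m ∈ Set.Iio p, f^[n] z = f^[m] z :=
    .of_forall fun n => ⟨n % p, Nat.mod_lt n hp, (hz.iterate_mod_apply n).symm⟩
  obtain ⟨m, -, hm⟩ := (Ultrafilter.eventually_exists_mem_iff (Set.finite_Iio p)).1 hmod
  exact ⟨m, hm⟩

lemma finite_range_iterate_of_mem_periodicPts {f : X → X} {z : X}
    (hz : z ∈ Function.periodicPts f) : (Set.range fun n => f^[n] z).Finite := by
  obtain ⟨p, hp, hz⟩ := hz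
  refine ((Set.finite_Iio p).image fun n => f^[n] z).subset ?_
  rintro _ ⟨n, rfl⟩
  exact ⟨n % p, Nat.mod_lt n hp, hz.iterate_mod_apply n⟩

lemma iterate_mem_periodicPts {f : X → X} {z : X} (hz : z ∈ Function.periodicPts f) (n : ℕ) :
    f^[n] z ∈ Function.periodicPts f :=
  ((Function.bijOn_periodicPts f).iterate n).mapsTo hz

section PseudoMetricSpace

variable [PseudoMetricSpace X] {f : X → X} {x y z : X}

lemma AsymptoticPair.symm (h : AsymptoticPair f x y) : AsymptoticPair f y x := by
  simpa only [AsymptoticPair, dist_comm] using h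

lemma AsymptoticPair.trans (hxy : AsymptoticPair f x y) (hyz : AsymptoticPair f y z) :
    AsymptoticPair f x z :=
  squeeze_zero (fun _ => dist_nonneg) (fun _ => dist_triangle _ _ _)
    (by simpa using Tendsto.add hxy hyz)

lemma ProximalPair.symm (h : ProximalPair f x y) : ProximalPair f y x := by
  simpa only [ProximalPair, dist_comm] using h

lemma ProximalPair.trans_asymptoticPair (hxy : ProximalPair f x y) (hyz : AsymptoticPair f y z) :
    ProximalPair f x z := by
  obtain ⟨U, hU, hlim⟩ := mapClusterPt_iff_ultrafilter.1 hxy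
  refine mapClusterPt_iff_ultrafilter.2 ⟨U, hU, ?_⟩
  exact squeeze_zero (fun _ => dist_nonneg) (fun _ => dist_triangle _ _ _)
    (by simpa using hlim.add (hyz.mono_left hU))

lemma AsymptoticallyPeriodic.exists_mapClusterPt (hx : AsymptoticallyPeriodic f x)
    (hxy : ProximalPair f x y) :
    ∃ w ∈ Function.periodicPts f, MapClusterPt w atTop fun n => f^[n] y := by
  obtain ⟨z, hz, hxz⟩ := hx
  obtain ⟨U, hU, hlim⟩ := mapClusterPt_iff_ultrafilter.1 (hxy.symm.trans_asymptoticPair hxz)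
  obtain ⟨m, hm⟩ := exists_eventually_iterate_eq_of_mem_periodicPts hz U
  refine ⟨f^[m] z, iterate_mem_periodicPts hz m, mapClusterPt_iff_ultrafilter.2 ⟨U, hU, ?_⟩⟩
  refine tendsto_iff_dist_tendsto_zero.2 (hlim.congr' ?_)
  filter_upwards [hm] with n hn using by rw [hn]

lemma AsymptoticallyPeriodic.of_iterate {t : ℕ} (h : AsymptoticallyPeriodic f (f^[t] x)) :
    AsymptoticallyPeriodic f x := by
  obtain ⟨z, hz, hxz⟩ := h
  obtain ⟨w, hw, rfl⟩ := ((Function.bijOn_periodicPts f).iterate t).surjOn hz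
  refine ⟨w, hw, (tendsto_add_atTop_iff_nat t).1 ?_⟩
  simpa only [AsymptoticPair, Function.iterate_add_apply] using hxz

end PseudoMetricSpace

section MetricSpace

variable [MetricSpace X] {f : X → X} {x y z w : X}

lemma ProximalPair.eq_of_mem_periodicPts (hzw : ProximalPair f z w)
    (hz : z ∈ Function.periodicPts f) (hw : w ∈ Function.periodicPts f) : z = w := by
  obtain ⟨U, -, hlim⟩ := mapClusterPt_iff_ultrafilter.1 hzw
  obtain ⟨k, hk⟩ := exists_eventually_iterate_eq_of_mem_periodicPts hz U
  obtain ⟨m, hm⟩ := exists_eventually_iterate_eq_of_mem_periodicPts hw U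
  have hconst : (fun n => dist (f^[n] z) (f^[n] w)) =ᶠ[U] fun _ => dist (f^[k] z) (f^[m] w) := by
    filter_upwards [hk, hm] with n hkn hmn using by rw [hkn, hmn]
  have hkm : f^[k] z = f^[m] w :=
    dist_eq_zero.1 (tendsto_nhds_unique (tendsto_const_nhds.congr' hconst.symm) hlim)
  obtain ⟨n, hkn, hmn⟩ := (hk.and hm).exists
  exact ((Function.bijOn_periodicPts f).iterate n).injOn hz hw (by rw [hkn, hkm, hmn])

lemma AsymptoticallyPeriodic.asymptoticPair (hx : AsymptoticallyPeriodic f x)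
    (hy : AsymptoticallyPeriodic f y) (hxy : ProximalPair f x y) : AsymptoticPair f x y := by
  obtain ⟨z, hz, hxz⟩ := hx
  obtain ⟨w, hw, hyw⟩ := hy
  have hzw : ProximalPair f z w :=
    ((hxy.trans_asymptoticPair hyw).symm.trans_asymptoticPair hxz).symm
  obtain rfl := hzw.eq_of_mem_periodicPts hz hw
  exact hxz.trans hyw.symm

lemma AsymptoticallyPeriodic.finite_setOf_mapClusterPt (hx : AsymptoticallyPeriodic f x) :
    {y | MapClusterPt y atTop fun n => f^[n] x}.Finite := by
  obtain ⟨z, hz, hxz⟩ := hx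
  refine (finite_range_iterate_of_mem_periodicPts hz).subset fun y hy => ?_
  obtain ⟨U, hU, hlim⟩ := mapClusterPt_iff_ultrafilter.1 hy
  obtain ⟨m, hm⟩ := exists_eventually_iterate_eq_of_mem_periodicPts hz U
  have hyz : Tendsto (fun n => f^[n] x) U (𝓝 (f^[m] z)) := by
    refine tendsto_iff_dist_tendsto_zero.2 ((hxz.mono_left hU).congr' ?_)
    filter_upwards [hm] with n hn using by rw [hn]
  exact ⟨m, tendsto_nhds_unique hyz hlim⟩

lemma AsymptoticallyPeriodic.of_tendsto_iterate {p : ℕ} (hp : 0 < p) (hf : Continuous f)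
    (h : Tendsto (fun n => (f^[p])^[n] x) atTop (𝓝 y)) : AsymptoticallyPeriodic f x := by
  have hy : Function.IsPeriodicPt f p y :=
    isFixedPt_of_tendsto_iterate h (hf.iterate p).continuousAt
  refine ⟨y, Function.mk_mem_periodicPts hp hy, ?_⟩
  have hsum : Tendsto
      (fun n => ∑ r ∈ Finset.range p, dist (f^[r] ((f^[p])^[n / p] x)) (f^[r] y)) atTop (𝓝 0) := by
    rw [← Finset.sum_const_zero (s := Finset.range p)]
    refine tendsto_finsetSum _ fun r _ => tendsto_iff_dist_tendsto_zero.1 ?_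
    exact ((hf.iterate r).tendsto y).comp (h.comp (Nat.tendsto_div_const_atTop hp.ne'))
  refine squeeze_zero (fun _ => dist_nonneg) (fun n => ?_) hsum
  have hn : dist (f^[n] x) (f^[n] y) = dist (f^[n % p] ((f^[p])^[n / p] x)) (f^[n % p] y) := by
    rw [hy.iterate_mod_apply, ← Function.iterate_mul, ← Function.iterate_add_apply,
      Nat.mod_add_div]
  rw [hn]
  exact Finset.single_le_sum (f := fun r => dist (f^[r] ((f^[p])^[n / p] x)) (f^[r] y))
    (fun _ _ => dist_nonneg) (Finset.mem_range.2 (Nat.mod_lt n hp))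

end MetricSpace

end Pairs

section MonotoneOrbits

variable {X : Type*}

lemma monotone_iterate_of_monotoneOn [Preorder X] {g : X → X} {s : Set X} {x : X}
    (hg : MonotoneOn g s) (hx : ∀ n, g^[n] x ∈ s) (h : x ≤ g x) : Monotone fun n => g^[n] x := by
  refine monotone_nat_of_le_succ fun n => ?_
  induction n with
  | zero => exact h
  | succ n ih => simpa only [Function.iterate_succ_apply'] using hg (hx n) (hx (n + 1)) ih

lemma antitone_iterate_of_monotoneOn [Preorder X] {g : X → X} {s : Set X} {x : X}
    (hg : MonotoneOn g s) (hx : ∀ n, g^[n] x ∈ s) (h : g x ≤ x) : Antitone fun n => g^[n] x := by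
  refine antitone_nat_of_succ_le fun n => ?_
  induction n with
  | zero => exact h
  | succ n ih => simpa only [Function.iterate_succ_apply'] using hg (hx (n + 1)) (hx n) ih

lemma asymptoticallyPeriodic_of_antitoneOn [MetricSpace X] [CompleteLinearOrder X]
    [OrderTopology X] {f : X → X} {s : Set X} {x : X} (hf : Continuous f) (hs : AntitoneOn f s)
    (hx : ∀ n, f^[n] x ∈ s) : AsymptoticallyPeriodic f x := by
  have hmono : MonotoneOn f^[2] (s ∩ f ⁻¹' s) := fun a ha b hb hab =>
    hs hb.2 ha.2 (hs ha.1 hb.1 hab)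
  have hmem : ∀ n, (f^[2])^[n] x ∈ s ∩ f ⁻¹' s := fun n => by
    rw [← Function.iterate_mul]
    exact ⟨hx _, by simpa only [Set.mem_preimage, ← Function.iterate_succ_apply'] using hx _⟩
  rcases le_total x (f^[2] x) with h | h
  · exact .of_tendsto_iterate two_pos hf
      (tendsto_atTop_iSup (monotone_iterate_of_monotoneOn hmono hmem h))
  · exact .of_tendsto_iterate two_pos hf
      (tendsto_atTop_iInf (antitone_iterate_of_monotoneOn hmono hmem h))

end MonotoneOrbits

section OrbitColorable

variable {X : Type*} [PseudoMetricSpace X]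

/-- The points of `A` can be painted with `N` colours so that the orbits of two points of the same
colour stay within `ε` of each other for `n` steps. Unlike separated sets, colourings can be
composed along an orbit. -/
def OrbitColorable (f : X → X) (A : Set X) (n : ℕ) (ε : ℝ) (N : ℕ) : Prop :=
  ∃ c : A → Fin N, ∀ x y, c x = c y → ∀ j < n, dist (f^[j] x) (f^[j] y) ≤ ε

namespace OrbitColorable

variable {f : X → X} {A B : Set X} {m n M N : ℕ} {ε : ℝ}

lemma of_fintype {ι : Type*} [Fintype ι] (c : A → ι)
    (hc : ∀ x y, c x = c y → ∀ j < n, dist (f^[j] x) (f^[j] y) ≤ ε) :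
    OrbitColorable f A n ε (Fintype.card ι) :=
  ⟨Fintype.equivFin ι ∘ c, fun x y hxy => hc x y ((Fintype.equivFin ι).injective hxy)⟩

lemma mono (h : OrbitColorable f A n ε N) (hBA : B ⊆ A) (hmn : m ≤ n) (hNM : N ≤ M) :
    OrbitColorable f B m ε M := by
  obtain ⟨c, hc⟩ := h
  exact ⟨Fin.castLE hNM ∘ c ∘ Set.inclusion hBA, fun x y hxy j hj =>
    hc _ _ (Fin.castLE_injective hNM hxy) j (hj.trans_le hmn)⟩

lemma mono_dist {δ : ℝ} (h : OrbitColorable f A n ε N) (hεδ : ε ≤ δ) :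
    OrbitColorable f A n δ N := by
  obtain ⟨c, hc⟩ := h
  exact ⟨c, fun x y hxy j hj => (hc x y hxy j hj).trans hεδ⟩

lemma iUnion {ι : Type*} [Fintype ι] {A : ι → Set X} (h : ∀ i, OrbitColorable f (A i) n ε N) :
    OrbitColorable f (⋃ i, A i) n ε (Fintype.card ι * N) := by
  choose c hc using h
  choose i hi using fun x : ⋃ i, A i => Set.mem_iUnion.1 x.2
  have hcol : ∀ x y : ⋃ i, A i, ∀ k (hy : (y : X) ∈ A k), i x = k →
      c (i x) ⟨x, hi x⟩ = c k ⟨y, hy⟩ → ∀ j < n, dist (f^[j] x) (f^[j] y) ≤ ε := by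
    rintro x y _ hy rfl hcxy
    exact hc _ _ _ hcxy
  have hunion := of_fintype (f := f) (n := n) (ε := ε) (fun x => (i x, c (i x) ⟨x, hi x⟩))
    fun x y hxy => hcol x y (i y) (hi y) (Prod.mk.inj hxy).1 (Prod.mk.inj hxy).2
  simpa using hunion

lemma union (hA : OrbitColorable f A n ε N) (hB : OrbitColorable f B n ε N) :
    OrbitColorable f (A ∪ B) n ε (2 * N) := by
  have hunion : OrbitColorable f (⋃ b, bif b then A else B) n ε (Fintype.card Bool * N) :=
    iUnion (Bool.forall_bool.2 ⟨hB, hA⟩)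
  rwa [← Set.union_eq_iUnion, Fintype.card_bool] at hunion

lemma range {g : X → X} {δ : ℝ} (h : OrbitColorable f Set.univ n ε N)
    (hg : ∀ v w, (∀ j < n, dist (f^[j] v) (f^[j] w) ≤ ε) →
      ∀ j < n, dist (f^[j] (g v)) (f^[j] (g w)) ≤ δ) :
    OrbitColorable f (Set.range g) n δ N := by
  obtain ⟨c, hc⟩ := h
  choose v hv using fun x : Set.range g => x.2
  refine ⟨fun x => c ⟨v x, Set.mem_univ _⟩, fun x y hxy => ?_⟩
  rw [← hv x, ← hv y]
  exact hg _ _ (hc _ _ hxy)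

lemma concat {t : ℕ} (hA : OrbitColorable f A t ε M) (hB : OrbitColorable f B (n - t) ε N)
    (hAB : Set.MapsTo f^[t] A B) : OrbitColorable f A n ε (M * N) := by
  obtain ⟨c, hc⟩ := hA
  obtain ⟨d, hd⟩ := hB
  have hcol := of_fintype (f := f) (n := n) (ε := ε) (fun x => (c x, d (hAB.restrict _ _ _ x)))
    fun x y hxy j hj => ?_
  · simpa using hcol
  · obtain ⟨hcxy, hdxy⟩ := Prod.mk.inj hxy
    rcases lt_or_ge j t with hjt | htj
    · exact hc x y hcxy j hjt
    · simpa only [Set.MapsTo.val_restrict_apply, ← Function.iterate_add_apply,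
        Nat.sub_add_cancel htj] using hd _ _ hdxy (j - t) (by lia)

end OrbitColorable

end OrbitColorable

section AntitoneBranch

variable {f : UI → UI} {s : Set UI} {k t : ℕ} {x y : UI}

lemma iterate_symm_iterate_le (hs : AntitoneOn f s) (hxy : x ≤ y) (hx : ∀ j < t, f^[j] x ∈ s)
    (hy : ∀ j < t, f^[j] y ∈ s) :
    unitInterval.symm^[t] (f^[t] x) ≤ unitInterval.symm^[t] (f^[t] y) := by
  induction t generalizing x y with
  | zero => exact hxy
  | succ t ih =>
    simp only [Function.iterate_succ_apply' unitInterval.symm, Function.iterate_succ_apply f,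
      unitInterval.symm_le_symm]
    exact ih (hs (hx 0 t.succ_pos) (hy 0 t.succ_pos) hxy)
      (fun j hj => hy (j + 1) (by lia)) (fun j hj => hx (j + 1) (by lia))

/-- The index of the cell of the partition of `[0,1]` into pieces of length `1 / k` that contains
the `j`-th point of the orbit of `x`, the cells being counted from the right for odd `j`; along an
antitone branch this makes the index monotone in `x`. -/
def orientedCell (f : UI → UI) (k j : ℕ) (x : UI) : ℕ :=
  ⌊(unitInterval.symm^[j] (f^[j] x) : ℝ) * k⌋₊

lemma orientedCell_le (f : UI → UI) (k j : ℕ) (x : UI) : orientedCell f k j x ≤ k :=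
  Nat.floor_le_of_le (mul_le_of_le_one_left k.cast_nonneg unitInterval.le_one')

lemma dist_iterate_le_of_orientedCell_eq {j : ℕ} (hk : 0 < k)
    (h : orientedCell f k j x = orientedCell f k j y) : dist (f^[j] x) (f^[j] y) ≤ 1 / k := by
  have hsymm : Isometry unitInterval.symm := Isometry.of_dist_eq fun a b => by
    simp only [Subtype.dist_eq, unitInterval.coe_symm_eq, dist_sub_left]
  have hiter : ∀ i, Isometry unitInterval.symm^[i] := fun i => by
    induction i with
    | zero => exact isometry_id
    | succ i ih => exact ih.comp hsymm
  have hk' : (0 : ℝ) < k := Nat.cast_pos.2 hk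
  have hfloor : ⌊(unitInterval.symm^[j] (f^[j] x) : ℝ) * k⌋ =
      ⌊(unitInterval.symm^[j] (f^[j] y) : ℝ) * k⌋ := by
    rw [← Int.natCast_floor_eq_floor (mul_nonneg unitInterval.nonneg' hk'.le),
      ← Int.natCast_floor_eq_floor (mul_nonneg unitInterval.nonneg' hk'.le)]
    exact congrArg _ h
  have hlt := (Int.abs_sub_lt_one_of_floor_eq_floor hfloor).le
  rw [← sub_mul, abs_mul, abs_of_pos hk'] at hlt
  rwa [← (hiter j).dist_eq, le_div_iff₀ hk', Subtype.dist_eq, Real.dist_eq]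

lemma orbitColorable_of_antitoneOn (hs : AntitoneOn f s) (hk : 0 < k) (t : ℕ) :
    OrbitColorable f {x | ∀ j < t, f^[j] x ∈ s} t (1 / k) (t * k + 1) := by
  have hmono : ∀ x y : {x | ∀ j < t, f^[j] x ∈ s}, x ≤ y → ∀ j ∈ Finset.range t,
      orientedCell f k j x ≤ orientedCell f k j y := fun x y hxy j hj => by
    refine Nat.floor_le_floor (mul_le_mul_of_nonneg_right ?_ k.cast_nonneg)
    have hj := Finset.mem_range.1 hj
    exact iterate_symm_iterate_le hs hxy (fun i hi => x.2 i (hi.trans hj))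
      fun i hi => y.2 i (hi.trans hj)
  have hsum : ∀ x : UI, ∑ j ∈ Finset.range t, orientedCell f k j x < t * k + 1 := fun x => by
    simpa [Nat.lt_succ_iff] using Finset.sum_le_sum fun j (_ : j ∈ Finset.range t) =>
      orientedCell_le f k j x
  refine ⟨fun x => ⟨∑ j ∈ Finset.range t, orientedCell f k j x, hsum x⟩, fun x y hxy j hj => ?_⟩
  -- The summands are monotone in the point, so equal sums have equal summands.
  have hcell : orientedCell f k j x = orientedCell f k j y := by
    have hxy := Fin.mk.inj hxy
    have hj := Finset.mem_range.2 hj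
    rcases le_total x y with hle | hle
    · exact (Finset.sum_eq_sum_iff_of_le (hmono x y hle)).1 hxy j hj
    · exact ((Finset.sum_eq_sum_iff_of_le (hmono y x hle)).1 hxy.symm j hj).symm
  exact dist_iterate_le_of_orientedCell_eq hk hcell

lemma exists_first_visit {X : Type*} (f : X → X) (A : Set X) (n : ℕ) (x : X) :
    ∃ t ≤ n, (∀ j < t, f^[j] x ∈ Aᶜ) ∧ (t < n → f^[t] x ∈ A) := by
  classical
  have hex : ∃ t, t < n → f^[t] x ∈ A := ⟨n, fun h => absurd h (lt_irrefl n)⟩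
  refine ⟨Nat.find hex, Nat.find_min' hex fun h => absurd h (lt_irrefl n), fun j hj hA => ?_,
    Nat.find_spec hex⟩
  exact Nat.find_min hex hj fun _ => hA

lemma OrbitColorable.univ_of_antitoneOn_compl {A : Set UI} {n N : ℕ} {ε : ℝ}
    (hA : OrbitColorable f A n ε N) (hN : 0 < N) (hf : AntitoneOn f Aᶜ) (hk : 0 < k)
    (hε : 1 / (k : ℝ) ≤ ε) : OrbitColorable f Set.univ n ε ((n + 1) * ((n * k + 1) * N)) := by
  let E (t : Fin (n + 1)) : Set UI :=
    {x | (∀ j < (t : ℕ), f^[j] x ∈ Aᶜ) ∧ ((t : ℕ) < n → f^[t] x ∈ A)}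
  have hE : ∀ t, OrbitColorable f (E t) n ε ((n * k + 1) * N) := fun t => by
    have ht : (t : ℕ) ≤ n := Nat.lt_succ_iff.1 t.2
    have hbranch : OrbitColorable f (E t) t ε (n * k + 1) :=
      ((orbitColorable_of_antitoneOn hf hk t).mono (fun x hx => hx.1) le_rfl
        (Nat.succ_le_succ (Nat.mul_le_mul_right k ht))).mono_dist hε
    rcases ht.lt_or_eq with hlt | heq
    · exact hbranch.concat (hA.mono subset_rfl (n.sub_le t) le_rfl) fun x hx => hx.2 hlt
    · exact hbranch.mono subset_rfl heq.ge (Nat.le_mul_of_pos_right _ hN)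
  have hcover : (⋃ t, E t) = Set.univ := Set.eq_univ_of_forall fun x => by
    obtain ⟨t, ht, hx⟩ := exists_first_visit f A n x
    exact Set.mem_iUnion.2 ⟨⟨t, Nat.lt_succ_iff.2 ht⟩, hx⟩
  simpa only [hcover, Fintype.card_fin] using OrbitColorable.iUnion hE

end AntitoneBranch

section EntropyAndChaos

lemma dist_unitInterval_le_one (x y : UI) : dist x y ≤ 1 :=
  Real.dist_le_of_mem_Icc_01 x.2 y.2

lemma trajN_const (f : UI → UI) (n : ℕ) : trajN (fun _ => f) n = f^[n] := by
  induction n with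
  | zero => rfl
  | succ n ih => rw [trajN, ih, Function.iterate_succ']

lemma OrbitColorable.sepNumT_le {f : UI → UI} {n N : ℕ} {ε : ℝ}
    (h : OrbitColorable f Set.univ n ε N) : sepNumT (fun _ => f) n ε ≤ N := by
  obtain ⟨c, hc⟩ := h
  refine csSup_le' ?_
  rintro _ ⟨E, rfl, hE⟩
  have hinj : Set.InjOn (fun x => c ⟨x, Set.mem_univ x⟩) E := fun x hx y hy hxy => by
    by_contra hne
    obtain ⟨j, hj, hdist⟩ := hE x hx y hy hne
    rw [trajN_const] at hdist
    exact hdist.not_ge (hc _ _ hxy j hj)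
  simpa using Finset.card_le_card_of_injOn _ (fun _ _ => Finset.mem_univ _) hinj

lemma tendsto_log_const_mul_pow_div_atTop (C d : ℕ) (hC : C ≠ 0) :
    Tendsto (fun n : ℕ => Real.log (C * n ^ d) / n) atTop (𝓝 0) := by
  have hlog : Tendsto (fun n : ℕ => Real.log n / n) atTop (𝓝 0) := by
    simpa [Function.comp_def] using (Real.tendsto_pow_log_div_mul_add_atTop 1 0 1 one_ne_zero).comp
      tendsto_natCast_atTop_atTop
  have hsum : Tendsto (fun n : ℕ => Real.log C / n + d * (Real.log n / n)) atTop (𝓝 0) := by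
    simpa using (tendsto_const_div_atTop_nhds_zero_nat (Real.log C)).add (hlog.const_mul (d : ℝ))
  refine hsum.congr' ?_
  filter_upwards [eventually_ge_atTop 1] with n hn
  rw [Real.log_mul (by positivity) (by positivity), Real.log_pow]
  ring

lemma topEntropyNDS_nonneg (f : ℕ → UI → UI) : 0 ≤ topEntropyNDS f := by
  refine le_iSup₂_of_le (1 : ℝ) (Set.mem_Ioi.2 one_pos) ?_
  refine le_limsup_of_frequently_le (Frequently.of_forall fun n => ?_)
  exact EReal.coe_nonneg.2 (div_nonneg (Real.log_natCast_nonneg _) n.cast_nonneg)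

lemma topEntropyNDS_eq_zero_of_sepNumT_le {f : ℕ → UI → UI}
    (hf : ∀ ε > 0, ∃ C d : ℕ, ∀ n ≥ 1, sepNumT f n ε ≤ C * n ^ d) : topEntropyNDS f = 0 := by
  refine le_antisymm (iSup₂_le fun ε hε => ?_) (topEntropyNDS_nonneg f)
  obtain ⟨C, d, hCd⟩ := hf ε hε
  have hlim : Tendsto (fun n : ℕ => ((Real.log ((C + 1 : ℕ) * n ^ d) / n : ℝ) : EReal)) atTop
      (𝓝 0) :=
    EReal.tendsto_coe.2 (tendsto_log_const_mul_pow_div_atTop (C + 1) d C.succ_ne_zero)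
  rw [← hlim.limsup_eq]
  refine limsup_le_limsup ?_
  filter_upwards [eventually_ge_atTop 1] with n hn
  refine EReal.coe_le_coe_iff.2 (div_le_div_of_nonneg_right ?_ n.cast_nonneg)
  have hle : sepNumT f n ε ≤ (C + 1) * n ^ d :=
    (hCd n hn).trans (Nat.mul_le_mul_right _ C.le_succ)
  rcases (sepNumT f n ε).eq_zero_or_pos with hzero | hpos
  · rw [hzero, Nat.cast_zero, Real.log_zero]
    exact_mod_cast Real.log_natCast_nonneg ((C + 1) * n ^ d)
  · exact Real.log_le_log (Nat.cast_pos.2 hpos) (by exact_mod_cast hle)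

lemma IsLYPair.proximalPair {f : UI → UI} {x y : UI} (h : IsLYPair (fun _ => f) x y) :
    ProximalPair f x y := by
  have hbdd : IsBoundedUnder (· ≤ ·) atTop fun n => dist (f^[n] x) (f^[n] y) :=
    isBoundedUnder_of ⟨1, fun n => dist_unitInterval_le_one _ _⟩
  have hliminf := h.2
  simp only [trajN_const] at hliminf
  rw [ProximalPair, ← hliminf]
  exact MapClusterPt.liminf hbdd.isCoboundedUnder_ge (isBoundedUnder_of ⟨0, fun n => dist_nonneg⟩)

lemma IsLYPair.not_asymptoticPair {f : UI → UI} {x y : UI} (h : IsLYPair (fun _ => f) x y) :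
    ¬ AsymptoticPair f x y := fun hxy => by
  have hlimsup := h.1
  simp only [trajN_const] at hlimsup
  exact hlimsup.ne' (Tendsto.limsup_eq hxy)

lemma not_liYorkeChaotic_of_forall_asymptoticPair {f : UI → UI}
    (hf : ∀ x y, ProximalPair f x y → AsymptoticPair f x y) : ¬ LiYorkeChaotic fun _ => f := by
  rintro ⟨S, hS, hpair⟩
  have hnontrivial : S.Nontrivial := by
    by_contra h
    exact hS (Set.not_nontrivial_iff.1 h).finite.countable
  obtain ⟨x, hx, y, hy, hne⟩ := hnontrivial
  have hxy := hpair x hx y hy hne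
  exact hxy.not_asymptoticPair (hf x y hxy.proximalPair)

end EntropyAndChaos

section Thirds

/-- The similarity of `[0,1]` onto its left third. -/
def leftThird (v : UI) : UI :=
  ⟨v / 3, div_nonneg v.2.1 three_pos.le, by linarith [v.2.2]⟩

/-- The similarity of `[0,1]` onto its right third. -/
def rightThird (v : UI) : UI :=
  ⟨(2 + v) / 3, by linarith [v.2.1], by linarith [v.2.2]⟩

/-- The open middle third of `[0,1]`. -/
def middleThird : Set UI := {x | (x : ℝ) ∈ Set.Ioo (1 / 3 : ℝ) (2 / 3)}

/-- The `L`-th stage of the construction of the Cantor set, as a subset of the type `[0,1]`. -/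
def cantorStage (L : ℕ) : Set UI := (↑) ⁻¹' preCantorSet L

/-- The middle-thirds Cantor set, as a subset of the type `[0,1]`. -/
def cantorUI : Set UI := (↑) ⁻¹' cantorSet

lemma compl_middleThird : middleThirdᶜ = Set.range leftThird ∪ Set.range rightThird := by
  ext x
  constructor
  · intro hx
    rcases le_or_gt (x : ℝ) (1 / 3) with hle | hlt
    · exact Or.inl ⟨⟨3 * x, by linarith [x.2.1], by linarith⟩, Subtype.ext (by simp [leftThird])⟩
    · have hle : 2 / 3 ≤ (x : ℝ) := not_lt.1 fun h => hx ⟨hlt, h⟩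
      exact Or.inr ⟨⟨3 * x - 2, by linarith, by linarith [x.2.2]⟩,
        Subtype.ext (by simp [rightThird])⟩
  · rintro (⟨v, rfl⟩ | ⟨v, rfl⟩) ⟨hlt, hgt⟩
    · have hle : (v : ℝ) / 3 ≤ 1 / 3 := by linarith [v.2.2]
      exact hlt.not_ge hle
    · have hle : 2 / 3 ≤ (2 + (v : ℝ)) / 3 := by linarith [v.2.1]
      exact hgt.not_ge hle

lemma dist_leftThird (v w : UI) : dist (leftThird v) (leftThird w) = dist v w / 3 := by
  simp only [leftThird, Subtype.dist_eq, Real.dist_eq, ← sub_div, abs_div, Nat.abs_ofNat]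

lemma dist_rightThird (v w : UI) : dist (rightThird v) (rightThird w) = dist v w / 3 := by
  simp only [rightThird, Subtype.dist_eq, Real.dist_eq, ← sub_div, abs_div, Nat.abs_ofNat,
    add_sub_add_left_eq_sub]

lemma third_le_dist_leftThird_rightThird (v w : UI) :
    1 / 3 ≤ dist (leftThird v) (rightThird w) := by
  rw [dist_comm]
  refine le_trans ?_ (le_abs_self _)
  simp only [leftThird, rightThird]
  linarith [v.2.2, w.2.1]

lemma cantorStage_zero : cantorStage 0 = Set.univ :=
  Set.eq_univ_of_forall fun x => x.2

lemma cantorStage_succ (L : ℕ) :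
    cantorStage (L + 1) = leftThird '' cantorStage L ∪ rightThird '' cantorStage L := by
  ext x
  simp only [cantorStage, Set.mem_preimage, preCantorSet_succ, Set.mem_union, Set.mem_image]
  refine or_congr ?_ ?_
  · exact ⟨fun ⟨v, hv, hvx⟩ => ⟨⟨v, preCantorSet_subset_unitInterval hv⟩, hv, Subtype.ext hvx⟩,
      fun ⟨v, hv, hvx⟩ => ⟨v, hv, congrArg Subtype.val hvx⟩⟩
  · exact ⟨fun ⟨v, hv, hvx⟩ => ⟨⟨v, preCantorSet_subset_unitInterval hv⟩, hv, Subtype.ext hvx⟩,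
      fun ⟨v, hv, hvx⟩ => ⟨v, hv, congrArg Subtype.val hvx⟩⟩

lemma leftThird_mem_cantorStage {L : ℕ} {v : UI} (hv : v ∈ cantorStage L) :
    leftThird v ∈ cantorStage (L + 1) :=
  cantorStage_succ L ▸ Or.inl (Set.mem_image_of_mem _ hv)

lemma rightThird_mem_cantorStage {L : ℕ} {v : UI} (hv : v ∈ cantorStage L) :
    rightThird v ∈ cantorStage (L + 1) :=
  cantorStage_succ L ▸ Or.inr (Set.mem_image_of_mem _ hv)

lemma isClosed_cantorStage (L : ℕ) : IsClosed (cantorStage L) :=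
  (isClosed_preCantorSet L).preimage continuous_subtype_val

lemma mem_cantorUI_iff {x : UI} : x ∈ cantorUI ↔ ∀ L, x ∈ cantorStage L :=
  Set.mem_iInter

/-- The identification of the Cantor set with the space of binary sequences, transported from
`cantorSetHomeomorphNatToBool`. -/
def cantorUIHomeomorph : cantorUI ≃ₜ (ℕ → Bool) :=
  (IsEmbedding.subtypeVal.homeomorphOfSubsetRange
    (Subtype.range_coe ▸ cantorSet_subset_unitInterval)).trans cantorSetHomeomorphNatToBool

lemma infinite_cantorUI : cantorUI.Infinite :=
  Set.infinite_coe_iff.1 (cantorUIHomeomorph.toEquiv.infinite_iff.2 inferInstance)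

end Thirds

/-- A continuous self-map of `[0,1]` which is antitone on the middle third, swaps the outer thirds,
and whose first return to an outer third is a rescaled copy of the map. -/
structure IsPeriodDoubling (f : UI → UI) : Prop where
  continuous : Continuous f
  apply_leftThird : ∀ v, f (leftThird v) = rightThird (f v)
  apply_rightThird : ∀ v, f (rightThird v) = leftThird v
  antitoneOn : AntitoneOn f middleThird

/-- The orbit of `x` is eventually trapped in every stage of the Cantor set. -/
def IsSolenoidal (f : UI → UI) (x : UI) : Prop :=
  ∀ L, ∀ᶠ n in atTop, f^[n] x ∈ cantorStage L

namespace IsPeriodDoubling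

variable {f : UI → UI} (hf : IsPeriodDoubling f) {x y : UI} {L : ℕ}

include hf

lemma surjective : Function.Surjective f := fun c => by
  have hleft : leftThird 0 = 0 := Subtype.ext (zero_div 3)
  have hzero : f 0 = 1 := Subtype.ext <| by
    have h := congrArg Subtype.val (hf.apply_leftThird 0)
    rw [hleft] at h
    simp only [rightThird] at h
    rw [Set.Icc.coe_one]
    linarith
  have hright : f (rightThird 0) = 0 := (hf.apply_rightThird 0).trans hleft
  exact mem_range_of_exists_le_of_exists_ge hf.continuous
    ⟨rightThird 0, hright.trans_le unitInterval.nonneg'⟩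
    ⟨0, unitInterval.le_one'.trans_eq hzero.symm⟩

lemma iterate_two_mul_leftThird (n : ℕ) (v : UI) :
    f^[2 * n] (leftThird v) = leftThird (f^[n] v) := by
  have hsemi : Function.Semiconj leftThird f f^[2] := fun v =>
    ((congrArg f (hf.apply_leftThird v)).trans (hf.apply_rightThird (f v))).symm
  rw [Function.iterate_mul]
  exact ((hsemi.iterate_right n).eq v).symm

lemma iterate_two_mul_rightThird (n : ℕ) (v : UI) :
    f^[2 * n] (rightThird v) = rightThird (f^[n] v) := by
  have hsemi : Function.Semiconj rightThird f f^[2] := fun v =>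
    ((congrArg f (hf.apply_rightThird v)).trans (hf.apply_leftThird v)).symm
  rw [Function.iterate_mul]
  exact ((hsemi.iterate_right n).eq v).symm

lemma dist_iterate_leftThird_and_rightThird (n : ℕ) (v w : UI) :
    dist (f^[n] (leftThird v)) (f^[n] (leftThird w)) =
        dist (f^[(n + 1) / 2] v) (f^[(n + 1) / 2] w) / 3 ∧
      dist (f^[n] (rightThird v)) (f^[n] (rightThird w)) =
        dist (f^[n / 2] v) (f^[n / 2] w) / 3 := by
  induction n generalizing v w with
  | zero => exact ⟨dist_leftThird v w, dist_rightThird v w⟩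
  | succ n ih =>
    simp only [Function.iterate_succ_apply, hf.apply_leftThird, hf.apply_rightThird]
    refine ⟨?_, (ih v w).1⟩
    rw [(ih (f v) (f w)).2, show (n + 1 + 1) / 2 = n / 2 + 1 by lia,
      Function.iterate_succ_apply, Function.iterate_succ_apply]

lemma dist_iterate_leftThird (n : ℕ) (v w : UI) :
    dist (f^[n] (leftThird v)) (f^[n] (leftThird w)) =
      dist (f^[(n + 1) / 2] v) (f^[(n + 1) / 2] w) / 3 :=
  (hf.dist_iterate_leftThird_and_rightThird n v w).1

lemma dist_iterate_rightThird (n : ℕ) (v w : UI) :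
    dist (f^[n] (rightThird v)) (f^[n] (rightThird w)) =
      dist (f^[n / 2] v) (f^[n / 2] w) / 3 :=
  (hf.dist_iterate_leftThird_and_rightThird n v w).2

lemma third_le_dist_iterate (n : ℕ) (v w : UI) :
    1 / 3 ≤ dist (f^[n] (leftThird v)) (f^[n] (rightThird w)) := by
  induction n generalizing v w with
  | zero => exact third_le_dist_leftThird_rightThird v w
  | succ n ih =>
    rw [Function.iterate_succ_apply, Function.iterate_succ_apply, hf.apply_leftThird,
      hf.apply_rightThird, dist_comm]
    exact ih w (f v)

lemma mapsTo_cantorStage (L : ℕ) : Set.MapsTo f (cantorStage L) (cantorStage L) := by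
  induction L with
  | zero => exact cantorStage_zero ▸ Set.mapsTo_univ f _
  | succ L ih =>
    intro x hx
    rcases cantorStage_succ L ▸ hx with ⟨v, hv, rfl⟩ | ⟨v, hv, rfl⟩
    · exact hf.apply_leftThird v ▸ rightThird_mem_cantorStage (ih hv)
    · exact hf.apply_rightThird v ▸ leftThird_mem_cantorStage hv

lemma iterate_mem_cantorStage_of_le {m n : ℕ} (hmn : m ≤ n) (hx : f^[m] x ∈ cantorStage L) :
    f^[n] x ∈ cantorStage L := by
  rw [← Nat.sub_add_cancel hmn, Function.iterate_add_apply]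
  exact (hf.mapsTo_cantorStage L).iterate _ hx

lemma mapsTo_cantorUI : Set.MapsTo f cantorUI cantorUI := fun _ hx =>
  mem_cantorUI_iff.2 fun L => hf.mapsTo_cantorStage L (mem_cantorUI_iff.1 hx L)

lemma exists_dist_iterate_le (hx : x ∈ cantorStage L) (hy : y ∈ cantorStage L) :
    ∃ n, dist (f^[n] x) y ≤ (1 / 3) ^ L := by
  induction L generalizing x y with
  | zero => exact ⟨0, by simpa only [pow_zero] using dist_unitInterval_le_one _ _⟩
  | succ L ih =>
    have hleft : ∀ v ∈ cantorStage L, ∀ w ∈ cantorStage L,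
        ∃ n, dist (f^[n] (leftThird v)) (leftThird w) ≤ (1 / 3) ^ (L + 1) := fun v hv w hw => by
      obtain ⟨n, hn⟩ := ih hv hw
      refine ⟨2 * n, ?_⟩
      rw [hf.iterate_two_mul_leftThird, dist_leftThird, pow_succ]
      linarith
    have hright : ∀ v ∈ cantorStage L, ∀ w ∈ cantorStage L,
        ∃ n, dist (f^[n] (rightThird v)) (rightThird w) ≤ (1 / 3) ^ (L + 1) := fun v hv w hw => by
      obtain ⟨n, hn⟩ := ih hv hw
      refine ⟨2 * n, ?_⟩
      rw [hf.iterate_two_mul_rightThird, dist_rightThird, pow_succ]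
      linarith
    rw [cantorStage_succ] at hx hy
    rcases hx with ⟨v, hv, rfl⟩ | ⟨v, hv, rfl⟩ <;> rcases hy with ⟨w, hw, rfl⟩ | ⟨w, hw, rfl⟩
    · exact hleft v hv w hw
    · obtain ⟨n, hn⟩ := hright (f v) (hf.mapsTo_cantorStage L hv) w hw
      exact ⟨n + 1, by rwa [Function.iterate_succ_apply, hf.apply_leftThird]⟩
    · obtain ⟨n, hn⟩ := hleft v hv w hw
      exact ⟨n + 1, by rwa [Function.iterate_succ_apply, hf.apply_rightThird]⟩
    · exact hright v hv w hw

lemma forall_dist_iterate_le_or_forall_le (hx : x ∈ cantorStage L) (hy : y ∈ cantorStage L) :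
    (∀ n, dist (f^[n] x) (f^[n] y) ≤ (1 / 3) ^ L) ∨
      ∀ n, (1 / 3) ^ L ≤ dist (f^[n] x) (f^[n] y) := by
  induction L generalizing x y with
  | zero =>
    exact Or.inl fun n => by simpa only [pow_zero] using dist_unitInterval_le_one _ _
  | succ L ih =>
    have hpow : ((1 : ℝ) / 3) ^ (L + 1) ≤ 1 / 3 :=
      pow_le_of_le_one (by norm_num) (by norm_num) L.succ_ne_zero
    rw [cantorStage_succ] at hx hy
    rcases hx with ⟨v, hv, rfl⟩ | ⟨v, hv, rfl⟩ <;> rcases hy with ⟨w, hw, rfl⟩ | ⟨w, hw, rfl⟩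
    · simp only [hf.dist_iterate_leftThird, pow_succ]
      exact (ih hv hw).imp (fun h n => by linarith [h ((n + 1) / 2)])
        fun h n => by linarith [h ((n + 1) / 2)]
    · exact Or.inr fun n => hpow.trans (hf.third_le_dist_iterate n v w)
    · exact Or.inr fun n => hpow.trans (dist_comm (f^[n] (leftThird w)) _ ▸
        hf.third_le_dist_iterate n w v)
    · simp only [hf.dist_iterate_rightThird, pow_succ]
      exact (ih hv hw).imp (fun h n => by linarith [h (n / 2)]) fun h n => by linarith [h (n / 2)]

lemma asymptoticallyPeriodic_leftThird (hx : AsymptoticallyPeriodic f x) :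
    AsymptoticallyPeriodic f (leftThird x) := by
  obtain ⟨z, ⟨p, hp, hz⟩, hxz⟩ := hx
  refine ⟨leftThird z, Function.mk_mem_periodicPts (n := 2 * p) (by positivity) ?_, ?_⟩
  · rw [Function.IsPeriodicPt, Function.IsFixedPt, hf.iterate_two_mul_leftThird, hz.eq]
  · have hhalf : Tendsto (fun n => (n + 1) / 2) atTop atTop :=
      (Nat.tendsto_div_const_atTop two_ne_zero).comp (tendsto_add_atTop_nat 1)
    simpa only [AsymptoticPair, hf.dist_iterate_leftThird, zero_div, Function.comp_def] using
      (hxz.comp hhalf).div_const 3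

lemma asymptoticallyPeriodic_or_exists_iterate_eq_leftThird (x : UI) :
    AsymptoticallyPeriodic f x ∨ ∃ n v, f^[n] x = leftThird v := by
  by_cases hmid : ∀ n, f^[n] x ∈ middleThird
  · exact Or.inl (asymptoticallyPeriodic_of_antitoneOn hf.continuous hf.antitoneOn hmid)
  · obtain ⟨n, hn⟩ := not_forall.1 hmid
    rcases compl_middleThird ▸ (show f^[n] x ∈ middleThirdᶜ from hn) with ⟨v, hv⟩ | ⟨v, hv⟩
    · exact Or.inr ⟨n, v, hv.symm⟩
    · exact Or.inr ⟨n + 1, v, by rw [Function.iterate_succ_apply', ← hv, hf.apply_rightThird]⟩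

lemma asymptoticallyPeriodic_or_exists_iterate_mem (L : ℕ) (x : UI) :
    AsymptoticallyPeriodic f x ∨ ∃ n, f^[n] x ∈ cantorStage L := by
  induction L generalizing x with
  | zero => exact Or.inr ⟨0, cantorStage_zero ▸ Set.mem_univ x⟩
  | succ L ih =>
    refine (hf.asymptoticallyPeriodic_or_exists_iterate_eq_leftThird x).elim Or.inl ?_
    rintro ⟨m, v, hv⟩
    rcases ih v with hper | ⟨n, hn⟩
    · exact Or.inl (.of_iterate (hv ▸ hf.asymptoticallyPeriodic_leftThird hper))
    · refine Or.inr ⟨2 * n + m, ?_⟩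
      rw [Function.iterate_add_apply, hv, hf.iterate_two_mul_leftThird]
      exact leftThird_mem_cantorStage hn

lemma asymptoticallyPeriodic_or_isSolenoidal (x : UI) :
    AsymptoticallyPeriodic f x ∨ IsSolenoidal f x := by
  refine or_iff_not_imp_left.2 fun hx L => ?_
  obtain ⟨m, hm⟩ := (hf.asymptoticallyPeriodic_or_exists_iterate_mem L x).resolve_left hx
  exact eventually_atTop.2 ⟨m, fun n hmn => hf.iterate_mem_cantorStage_of_le hmn hm⟩

lemma isSolenoidal_of_mem_cantorUI (hx : x ∈ cantorUI) : IsSolenoidal f x := fun L =>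
  .of_forall fun n => (hf.mapsTo_cantorStage L).iterate n (mem_cantorUI_iff.1 hx L)

lemma omegaSet_eq_cantorUI (hx : IsSolenoidal f x) : omegaSet f x = cantorUI := by
  refine Set.Subset.antisymm (fun y hy => mem_cantorUI_iff.2 fun L =>
    (isClosed_cantorStage L).mem_of_mapClusterPt hy (hx L)) fun y hy => ?_
  refine (Metric.nhds_basis_ball.mapClusterPt_iff_frequently).2 fun ε hε => ?_
  obtain ⟨L, hL⟩ := exists_pow_lt_of_lt_one hε (by norm_num : (1 / 3 : ℝ) < 1)
  refine frequently_atTop.2 fun N => ?_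
  obtain ⟨n, hn, hnN⟩ := ((hx L).and (eventually_ge_atTop N)).exists
  obtain ⟨m, hm⟩ := hf.exists_dist_iterate_le hn (mem_cantorUI_iff.1 hy L)
  rw [← Function.iterate_add_apply] at hm
  exact ⟨m + n, by lia, hm.trans_lt hL⟩

lemma finite_omegaSet_or_omegaSet_eq_cantorUI (x : UI) :
    (omegaSet f x).Finite ∨ omegaSet f x = cantorUI :=
  (hf.asymptoticallyPeriodic_or_isSolenoidal x).imp (fun h => h.finite_setOf_mapClusterPt)
    hf.omegaSet_eq_cantorUI

lemma cantorUI_subset_closure_orbit (hx : x ∈ cantorUI) :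
    cantorUI ⊆ closure (Set.range fun n => f^[n] x) := by
  rw [← hf.omegaSet_eq_cantorUI (hf.isSolenoidal_of_mem_cantorUI hx)]
  exact fun y hy =>
    closure_mono (Set.image_subset_range _ _) (mapClusterPt_atTop_iff_forall_mem_closure.1 hy 0)

lemma notMem_cantorUI_of_mem_periodicPts (hx : x ∈ Function.periodicPts f) : x ∉ cantorUI :=
  fun hmem => by
    have hper : AsymptoticallyPeriodic f x := ⟨x, hx, by simp [AsymptoticPair]⟩
    have hfin : (omegaSet f x).Finite := hper.finite_setOf_mapClusterPt
    rw [hf.omegaSet_eq_cantorUI (hf.isSolenoidal_of_mem_cantorUI hmem)] at hfin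
    exact infinite_cantorUI hfin

lemma not_proximalPair (hx : AsymptoticallyPeriodic f x) (hy : IsSolenoidal f y) :
    ¬ ProximalPair f x y := fun hxy => by
  obtain ⟨w, hw, hwy⟩ := hx.exists_mapClusterPt hxy
  exact hf.notMem_cantorUI_of_mem_periodicPts hw (hf.omegaSet_eq_cantorUI hy ▸ hwy)

lemma asymptoticPair_of_isSolenoidal (hx : IsSolenoidal f x) (hy : IsSolenoidal f y)
    (hxy : ProximalPair f x y) : AsymptoticPair f x y := by
  refine Metric.tendsto_atTop'.2 fun ε hε => ?_
  obtain ⟨L, hL⟩ := exists_pow_lt_of_lt_one hε (by norm_num : (1 / 3 : ℝ) < 1)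
  obtain ⟨t, hxt, hyt⟩ := ((hx L).and (hy L)).exists
  have hshift : ∀ n, t ≤ n → f^[n - t] (f^[t] x) = f^[n] x ∧ f^[n - t] (f^[t] y) = f^[n] y :=
    fun n hn => by simp only [← Function.iterate_add_apply, Nat.sub_add_cancel hn, and_self]
  rcases hf.forall_dist_iterate_le_or_forall_le hxt hyt with hclose | hfar
  · refine ⟨t, fun n hn => ?_⟩
    have hle := hclose (n - t)
    rw [(hshift n hn.le).1, (hshift n hn.le).2] at hle
    simpa using hle.trans_lt hL
  · have hfreq : ∃ᶠ n in atTop, dist (f^[n] x) (f^[n] y) < (1 / 3) ^ L :=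
      hxy.frequently (gt_mem_nhds (by positivity))
    obtain ⟨n, hlt, hn⟩ := (hfreq.and_eventually (eventually_ge_atTop t)).exists
    have hle := hfar (n - t)
    rw [(hshift n hn).1, (hshift n hn).2] at hle
    exact absurd hlt hle.not_gt

lemma asymptoticPair_of_proximalPair (hxy : ProximalPair f x y) : AsymptoticPair f x y := by
  rcases hf.asymptoticallyPeriodic_or_isSolenoidal x with hx | hx <;>
    rcases hf.asymptoticallyPeriodic_or_isSolenoidal y with hy | hy
  · exact hx.asymptoticPair hy hxy
  · exact absurd hxy (hf.not_proximalPair hx hy)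
  · exact absurd hxy.symm (hf.not_proximalPair hy hx)
  · exact hf.asymptoticPair_of_isSolenoidal hx hy hxy

lemma orbitColorable_range_union_range {n N : ℕ} {ε : ℝ}
    (h : OrbitColorable f Set.univ n ε N) :
    OrbitColorable f (Set.range leftThird ∪ Set.range rightThird) n (ε / 3) (2 * N) := by
  have hleft : OrbitColorable f (Set.range leftThird) n (ε / 3) N :=
    h.range fun v w hvw j hj => by
      rw [hf.dist_iterate_leftThird]
      linarith [hvw ((j + 1) / 2) (by lia)]
  have hright : OrbitColorable f (Set.range rightThird) n (ε / 3) N :=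
    h.range fun v w hvw j hj => by
      rw [hf.dist_iterate_rightThird]
      linarith [hvw (j / 2) (by lia)]
  exact hleft.union hright

lemma orbitColorable_univ (n : ℕ) {k : ℕ} (hk : 3 ^ L ≤ k) :
    OrbitColorable f Set.univ n ((1 / 3) ^ L) (((n + 1) * ((n * k + 1) * 2)) ^ L) := by
  induction L with
  | zero =>
    refine ⟨fun _ => 0, fun x y _ j _ => ?_⟩
    simpa only [pow_zero] using dist_unitInterval_le_one _ _
  | succ L ih =>
    have hε : 1 / (k : ℝ) ≤ (1 / 3) ^ L / 3 := by
      rw [one_div_pow, div_div, ← pow_succ]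
      exact one_div_le_one_div_of_le (by positivity) (by exact_mod_cast hk)
    have hcol := hf.orbitColorable_range_union_range
      (ih ((Nat.pow_le_pow_right three_pos L.le_succ).trans hk))
    have hanti : AntitoneOn f (Set.range leftThird ∪ Set.range rightThird)ᶜ := by
      rw [← compl_middleThird, compl_compl]
      exact hf.antitoneOn
    have hstep := hcol.univ_of_antitoneOn_compl (by positivity) hanti
      ((by positivity : 0 < 3 ^ (L + 1)).trans_le hk) hε
    rw [pow_succ, pow_succ _ L]
    convert hstep using 1 <;> ring

lemma topEntropyNDS_eq_zero : topEntropyNDS (fun _ => f) = 0 := by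
  refine topEntropyNDS_eq_zero_of_sepNumT_le fun ε hε => ?_
  obtain ⟨L, hL⟩ := exists_pow_lt_of_lt_one hε (by norm_num : (1 / 3 : ℝ) < 1)
  refine ⟨(8 * 3 ^ L) ^ L, 2 * L, fun n hn => ?_⟩
  have hcol := (hf.orbitColorable_univ n (le_refl (3 ^ L))).mono_dist hL.le
  have hpow : 1 ≤ 3 ^ L := Nat.one_le_pow _ _ three_pos
  calc sepNumT (fun _ => f) n ε ≤ ((n + 1) * ((n * 3 ^ L + 1) * 2)) ^ L := hcol.sepNumT_le
    _ ≤ ((n + n) * ((n * 3 ^ L + n * 3 ^ L) * 2)) ^ L := by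
        gcongr
        exact Nat.mul_pos hn hpow
    _ = (8 * 3 ^ L) ^ L * n ^ (2 * L) := by ring

end IsPeriodDoubling

section DoublingMap

/-- The explicit part of the map: near `1 / 2` it is `s ↦ -s * |s|` up to an affine change of
coordinates, on the right third it is the translation onto the left third, and it is constant to the
left of the middle third and to the right of `1`. -/
def doublingProfile (u : ℝ) : ℝ :=
  max (min (7 / 9) (1 / 2 - 18 * ((u - 1 / 2) * |u - 1 / 2|))) (min (u - 2 / 3) (1 / 3))

/-- The solution of the renormalization equation `F u = doublingProfile u - 1 / 9 + F (3 * u) / 3`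
as a uniformly convergent series. -/
def doublingFun (u : ℝ) : ℝ :=
  1 - ∑' n : ℕ, (1 / 3) ^ n * (7 / 9 - doublingProfile (3 ^ n * u))

lemma monotone_mul_abs_self : Monotone fun s : ℝ => s * |s| := by
  intro s t hst
  dsimp only
  rcases abs_cases s with ⟨hs, hs_sign⟩ | ⟨hs, hs_sign⟩ <;>
    rcases abs_cases t with ⟨ht, ht_sign⟩ | ⟨ht, ht_sign⟩ <;>
      rw [hs, ht] <;> nlinarith [hs_sign, ht_sign]

variable {u : ℝ}

lemma doublingProfile_nonneg (u : ℝ) : 0 ≤ doublingProfile u := by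
  rcases le_total u (2 / 3) with hu | hu
  · have hsq : (u - 1 / 2) * |u - 1 / 2| ≤ 1 / 36 :=
      (monotone_mul_abs_self (by linarith : u - 1 / 2 ≤ 1 / 6)).trans (by norm_num [abs_of_pos])
    exact le_max_of_le_left (le_min (by norm_num) (by linarith))
  · exact le_max_of_le_right (le_min (by linarith) (by norm_num))

lemma doublingProfile_le (u : ℝ) : doublingProfile u ≤ 7 / 9 :=
  max_le (min_le_left _ _) ((min_le_right _ _).trans (by norm_num))

lemma continuous_doublingProfile : Continuous doublingProfile := by
  unfold doublingProfile
  fun_prop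

lemma doublingProfile_of_le_two_thirds (hu : u ≤ 2 / 3) :
    doublingProfile u = min (7 / 9) (1 / 2 - 18 * ((u - 1 / 2) * |u - 1 / 2|)) := by
  have hsq : (u - 1 / 2) * |u - 1 / 2| ≤ 1 / 36 :=
    (monotone_mul_abs_self (by linarith : u - 1 / 2 ≤ 1 / 6)).trans (by norm_num [abs_of_pos])
  refine max_eq_left ((min_le_left _ _).trans ((sub_nonpos.2 hu).trans (le_min (by norm_num) ?_)))
  linarith

lemma doublingProfile_of_le_third (hu : u ≤ 1 / 3) : doublingProfile u = 7 / 9 := by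
  have hsq : (u - 1 / 2) * |u - 1 / 2| ≤ -(1 / 36) :=
    (monotone_mul_abs_self (by linarith : u - 1 / 2 ≤ -(1 / 6))).trans
      (by norm_num [abs_of_pos])
  rw [doublingProfile_of_le_two_thirds (by linarith), min_eq_left (by linarith)]

lemma doublingProfile_of_two_thirds_le (hu : 2 / 3 ≤ u) :
    doublingProfile u = min (u - 2 / 3) (1 / 3) := by
  have hsq : 1 / 36 ≤ (u - 1 / 2) * |u - 1 / 2| :=
    le_trans (by norm_num [abs_of_pos]) (monotone_mul_abs_self (by linarith : 1 / 6 ≤ u - 1 / 2))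
  refine max_eq_right ((min_le_right _ _).trans (le_trans ?_ (le_min (sub_nonneg.2 hu) ?_))) <;>
    linarith

lemma antitoneOn_doublingProfile : AntitoneOn doublingProfile (Set.Iic (2 / 3)) := by
  intro u hu v hv huv
  have hmono := monotone_mul_abs_self (sub_le_sub_right huv (1 / 2))
  rw [doublingProfile_of_le_two_thirds hu, doublingProfile_of_le_two_thirds hv]
  exact min_le_min_left _ (by linarith)

lemma doublingFun_term_nonneg (u : ℝ) (n : ℕ) :
    0 ≤ (1 / 3 : ℝ) ^ n * (7 / 9 - doublingProfile (3 ^ n * u)) :=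
  mul_nonneg (by positivity) (sub_nonneg.2 (doublingProfile_le _))

lemma doublingFun_term_le (u : ℝ) (n : ℕ) :
    (1 / 3 : ℝ) ^ n * (7 / 9 - doublingProfile (3 ^ n * u)) ≤ (1 / 3) ^ n * (7 / 9) :=
  mul_le_mul_of_nonneg_left (sub_le_self _ (doublingProfile_nonneg _)) (by positivity)

lemma summable_geometric_third (c : ℝ) : Summable fun n : ℕ => (1 / 3 : ℝ) ^ n * c :=
  (summable_geometric_of_lt_one (by norm_num) (by norm_num)).mul_right c

lemma summable_doublingFun_term (u : ℝ) :
    Summable fun n : ℕ => (1 / 3 : ℝ) ^ n * (7 / 9 - doublingProfile (3 ^ n * u)) :=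
  .of_nonneg_of_le (doublingFun_term_nonneg u) (doublingFun_term_le u)
    (summable_geometric_third _)

lemma continuous_doublingFun : Continuous doublingFun := by
  have hcont := continuous_doublingProfile
  refine continuous_const.sub (continuous_tsum (fun n => by fun_prop)
    (summable_geometric_third (7 / 9)) fun n u => ?_)
  rw [Real.norm_of_nonneg (doublingFun_term_nonneg u n)]
  exact doublingFun_term_le u n

lemma doublingFun_eq_add (u : ℝ) :
    doublingFun u = doublingProfile u - 1 / 9 + doublingFun (3 * u) / 3 := by
  have hshift : ∀ n : ℕ, (1 / 3 : ℝ) ^ (n + 1) * (7 / 9 - doublingProfile (3 ^ (n + 1) * u)) =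
      1 / 3 * ((1 / 3) ^ n * (7 / 9 - doublingProfile (3 ^ n * (3 * u)))) := fun n => by
    rw [pow_succ, pow_succ]
    ring_nf
  rw [doublingFun, doublingFun, (summable_doublingFun_term u).tsum_eq_zero_add]
  simp only [hshift, tsum_mul_left, pow_zero, one_mul]
  ring

lemma doublingFun_of_one_le (hu : 1 ≤ u) : doublingFun u = 1 / 3 := by
  have hterm : ∀ n : ℕ, doublingProfile (3 ^ n * u) = 1 / 3 := fun n => by
    have hn : 1 ≤ 3 ^ n * u := one_le_mul_of_one_le_of_one_le (one_le_pow₀ (by norm_num)) hu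
    rw [doublingProfile_of_two_thirds_le (by linarith), min_eq_right (by linarith)]
  simp only [doublingFun, hterm]
  rw [tsum_mul_right, tsum_geometric_of_lt_one (by norm_num) (by norm_num)]
  norm_num

lemma doublingFun_of_third_le (hu : 1 / 3 ≤ u) : doublingFun u = doublingProfile u := by
  rw [doublingFun_eq_add, doublingFun_of_one_le (by linarith)]
  ring

lemma doublingFun_of_le_third (hu : u ≤ 1 / 3) :
    doublingFun u = (2 + doublingFun (3 * u)) / 3 := by
  rw [doublingFun_eq_add, doublingProfile_of_le_third hu]
  ring

lemma doublingFun_le_one (u : ℝ) : doublingFun u ≤ 1 :=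
  sub_le_self _ (tsum_nonneg (doublingFun_term_nonneg u))

lemma doublingFun_nonneg (u : ℝ) : 0 ≤ doublingFun u := by
  have hcrude : ∀ v, -2 ≤ doublingFun v := fun v => by
    have hsum := (summable_doublingFun_term v).tsum_le_tsum (doublingFun_term_le v)
      (summable_geometric_third _)
    rw [tsum_mul_right, tsum_geometric_of_lt_one (by norm_num) (by norm_num)] at hsum
    rw [doublingFun]
    linarith
  rcases le_total u (1 / 3) with hu | hu
  · rw [doublingFun_of_le_third hu]
    linarith [hcrude (3 * u)]
  · exact doublingFun_of_third_le hu ▸ doublingProfile_nonneg u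

lemma doublingFun_half_add {θ : ℝ} (hθ : |θ| ≤ 1) :
    doublingFun (1 / 2 + θ / 18) = 1 / 2 - θ * |θ| / 18 := by
  have hθ' := abs_le.1 hθ
  have hsq : -1 ≤ θ * |θ| := by simpa using monotone_mul_abs_self hθ'.1
  have hscale : 18 * ((1 / 2 + θ / 18 - 1 / 2) * |1 / 2 + θ / 18 - 1 / 2|) = θ * |θ| / 18 := by
    rw [add_sub_cancel_left, abs_div, abs_of_pos (by norm_num : (0 : ℝ) < 18)]
    ring
  rw [doublingFun_of_third_le (by linarith [hθ'.1]),
    doublingProfile_of_le_two_thirds (by linarith [hθ'.2]), hscale, min_eq_right (by linarith)]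

/-- The period-doubling map of the theorem: `doublingFun` as a self-map of `[0, 1]`. -/
def doublingMap (x : UI) : UI :=
  ⟨doublingFun x, doublingFun_nonneg x, doublingFun_le_one x⟩

lemma isPeriodDoubling_doublingMap : IsPeriodDoubling doublingMap where
  continuous := (continuous_doublingFun.comp continuous_subtype_val).subtype_mk _
  apply_leftThird v := Subtype.ext <| by
    have hv : (v : ℝ) / 3 ≤ 1 / 3 := by linarith [v.2.2]
    simp only [doublingMap, leftThird, rightThird]
    rw [doublingFun_of_le_third hv, mul_div_cancel₀ _ three_ne_zero]
  apply_rightThird v := Subtype.ext <| by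
    have hv : 2 / 3 ≤ (2 + (v : ℝ)) / 3 := by linarith [v.2.1]
    simp only [doublingMap, leftThird, rightThird]
    rw [doublingFun_of_third_le (by linarith), doublingProfile_of_two_thirds_le hv,
      min_eq_left (by linarith [v.2.2])]
    ring
  antitoneOn x hx y hy hxy := by
    refine Subtype.coe_le_coe.1 ?_
    simp only [doublingMap]
    rw [doublingFun_of_third_le hx.1.le, doublingFun_of_third_le hy.1.le]
    exact antitoneOn_doublingProfile hx.2.le hy.2.le hxy

end DoublingMap

section WanderingIntervals

variable {m n : ℤ} {r s : UI}

lemma abs_neg_one_zpow_mul_rpow (n : ℤ) (r : UI) :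
    |(-1 : ℝ) ^ n * (r : ℝ) ^ (2 : ℝ) ^ n| = (r : ℝ) ^ (2 : ℝ) ^ n := by
  rw [abs_mul, abs_zpow, abs_neg, abs_one, one_zpow, one_mul,
    abs_of_nonneg (Real.rpow_nonneg r.2.1 _)]

lemma abs_neg_one_zpow_mul_rpow_le_one (n : ℤ) (r : UI) :
    |(-1 : ℝ) ^ n * (r : ℝ) ^ (2 : ℝ) ^ n| ≤ 1 :=
  (abs_neg_one_zpow_mul_rpow n r).trans_le (Real.rpow_le_one r.2.1 r.2.2 (by positivity))

/-- The full orbit, indexed by `ℤ`, of the point at relative distance `r` from the centre `1 / 2`: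
each step squares the relative distance and changes sides. -/
def wanderingPoint (n : ℤ) (r : UI) : UI :=
  ⟨1 / 2 + (-1 : ℝ) ^ n * (r : ℝ) ^ (2 : ℝ) ^ n / 18, by
    constructor <;> linarith [(abs_le.1 (abs_neg_one_zpow_mul_rpow_le_one n r)).1,
      (abs_le.1 (abs_neg_one_zpow_mul_rpow_le_one n r)).2]⟩

/-- The `n`-th wandering interval; it is disjoint from the others because `(1 / 2) ^ 2 < 1 / 3`. -/
def wanderingInterval (n : ℤ) : Set UI :=
  wanderingPoint n '' Set.Icc ⟨1 / 3, by norm_num, by norm_num⟩ ⟨1 / 2, by norm_num, by norm_num⟩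

lemma two_zpow_add_one_rpow (n : ℤ) (r : UI) :
    (r : ℝ) ^ (2 : ℝ) ^ (n + 1) = ((r : ℝ) ^ (2 : ℝ) ^ n) ^ 2 := by
  rw [zpow_add_one₀ two_ne_zero, Real.rpow_mul r.2.1, Real.rpow_two]

lemma doublingMap_wanderingPoint (n : ℤ) (r : UI) :
    doublingMap (wanderingPoint n r) = wanderingPoint (n + 1) r := by
  refine Subtype.ext ?_
  simp only [doublingMap, wanderingPoint]
  rw [doublingFun_half_add (abs_neg_one_zpow_mul_rpow_le_one n r), abs_neg_one_zpow_mul_rpow,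
    two_zpow_add_one_rpow, zpow_add_one₀ (by norm_num)]
  ring

lemma image_doublingMap_wanderingInterval (n : ℤ) :
    doublingMap '' wanderingInterval n = wanderingInterval (n + 1) := by
  simp only [wanderingInterval, Set.image_image, doublingMap_wanderingPoint]

lemma wanderingPoint_ne (hmn : m < n) (hr : 1 / 3 ≤ (r : ℝ)) (hs : (s : ℝ) ≤ 1 / 2) :
    wanderingPoint m r ≠ wanderingPoint n s := fun h => by
  have hrs : (-1 : ℝ) ^ m * (r : ℝ) ^ (2 : ℝ) ^ m = (-1 : ℝ) ^ n * (s : ℝ) ^ (2 : ℝ) ^ n := by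
    simpa [wanderingPoint] using congrArg Subtype.val h
  have habs := congrArg abs hrs
  rw [abs_neg_one_zpow_mul_rpow, abs_neg_one_zpow_mul_rpow] at habs
  have hle : (s : ℝ) ^ (2 : ℝ) ^ n ≤ (s : ℝ) ^ (2 * (2 : ℝ) ^ m) := by
    refine Real.rpow_le_rpow_of_exponent_ge' s.2.1 s.2.2 (by positivity) ?_
    rw [← zpow_one_add₀ two_ne_zero]
    exact zpow_le_zpow_right₀ one_le_two (by omega)
  refine habs.not_gt (hle.trans_lt ?_)
  rw [Real.rpow_mul s.2.1, Real.rpow_two]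
  exact Real.rpow_lt_rpow (by positivity) (by nlinarith [s.2.1]) (by positivity)

lemma pairwise_disjoint_wanderingInterval :
    Pairwise fun m n => Disjoint (wanderingInterval m) (wanderingInterval n) := by
  have hlt : ∀ m n, m < n → Disjoint (wanderingInterval m) (wanderingInterval n) := by
    intro m n hmn
    rw [Set.disjoint_left]
    rintro _ ⟨r, hr, rfl⟩ ⟨s, hs, h⟩
    exact wanderingPoint_ne hmn hr.1 hs.2 h.symm
  intro m n hmn
  exact hmn.lt_or_gt.elim (hlt m n) fun hnm => (hlt n m hnm).symm

lemma continuous_wanderingPoint (n : ℤ) : Continuous (wanderingPoint n) := by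
  refine Continuous.subtype_mk ?_ _
  have hrpow : Continuous fun r : UI => (r : ℝ) ^ (2 : ℝ) ^ n :=
    continuous_subtype_val.rpow_const fun _ => Or.inr (by positivity)
  fun_prop

lemma strictMono_or_strictAnti_wanderingPoint (n : ℤ) :
    StrictMono (wanderingPoint n) ∨ StrictAnti (wanderingPoint n) := by
  have hmono : ∀ r s : UI, r < s → (r : ℝ) ^ (2 : ℝ) ^ n < (s : ℝ) ^ (2 : ℝ) ^ n := fun r s hrs =>
    Real.rpow_lt_rpow r.2.1 hrs (by positivity)
  rcases Int.even_or_odd n with hn | hn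
  · refine Or.inl fun r s hrs => Subtype.coe_lt_coe.1 ?_
    simp only [wanderingPoint, hn.neg_one_zpow]
    linarith [hmono r s hrs]
  · refine Or.inr fun r s hrs => Subtype.coe_lt_coe.1 ?_
    simp only [wanderingPoint, hn.neg_one_zpow]
    linarith [hmono r s hrs]

lemma wanderingPoint_mem_Ioo (n : ℤ) (r : UI) : (wanderingPoint n r : ℝ) ∈ Set.Ioo (0 : ℝ) 1 := by
  have habs := abs_le.1 (abs_neg_one_zpow_mul_rpow_le_one n r)
  constructor <;> simp only [wanderingPoint] <;> linarith [habs.1, habs.2]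

lemma exists_wanderingInterval_eq_Icc (n : ℤ) :
    ∃ a b : UI, a < b ∧ (0 : ℝ) < a ∧ (b : ℝ) < 1 ∧ wanderingInterval n = Set.Icc a b := by
  have hlt : (⟨1 / 3, by norm_num, by norm_num⟩ : UI) < ⟨1 / 2, by norm_num, by norm_num⟩ :=
    Subtype.mk_lt_mk.2 (by norm_num)
  rcases strictMono_or_strictAnti_wanderingPoint n with h | h
  · refine ⟨_, _, h hlt, (wanderingPoint_mem_Ioo n _).1, (wanderingPoint_mem_Ioo n _).2, ?_⟩
    exact (continuous_wanderingPoint n).continuousOn.image_Icc_of_monotoneOn hlt.le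
      (h.monotone.monotoneOn _)
  · refine ⟨_, _, h hlt, (wanderingPoint_mem_Ioo n _).1, (wanderingPoint_mem_Ioo n _).2, ?_⟩
    exact (continuous_wanderingPoint n).continuousOn.image_Icc_of_antitoneOn hlt.le
      (h.antitone.antitoneOn _)

end WanderingIntervals

/-- There is a surjective continuous self-map of the interval with zero topological entropy,
exactly one infinite ω-limit set — a Cantor set on which the map is minimal —, which is not
Li-Yorke chaotic, and admitting a family `{G n}_{n ∈ ℤ}` of pairwise disjoint nondegenerate
compact subintervals of `(0,1)` with `f(G n) = G (n+1)`. -/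
theorem exists_zero_entropy_adding_machine_like_map :
    ∃ f : UI → UI, Continuous f ∧ Function.Surjective f ∧
      topEntropyNDS (fun _ => f) = 0 ∧
      (∃ ω : Set UI,
        (∃ x, omegaSet f x = ω) ∧ ω.Infinite ∧
        (∀ x, (omegaSet f x).Infinite → omegaSet f x = ω) ∧
        Nonempty (ω ≃ₜ (ℕ → Bool)) ∧
        Set.MapsTo f ω ω ∧
        (∀ x ∈ ω, ω ⊆ closure (Set.range fun n => f^[n] x))) ∧
      ¬ LiYorkeChaotic (fun _ => f) ∧
      (∃ G : ℤ → Set UI,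
        (∀ n, ∃ a b : UI, a < b ∧ (0 : ℝ) < (a : ℝ) ∧ (b : ℝ) < 1 ∧ G n = Set.Icc a b) ∧
        (Pairwise fun m n => Disjoint (G m) (G n)) ∧
        (∀ n, f '' G n = G (n + 1))) := by
  have hf := isPeriodDoubling_doublingMap
  refine ⟨doublingMap, hf.continuous, hf.surjective, hf.topEntropyNDS_eq_zero,
    ⟨cantorUI, ⟨0, ?_⟩, infinite_cantorUI, ?_, ⟨cantorUIHomeomorph⟩, hf.mapsTo_cantorUI, ?_⟩,
    not_liYorkeChaotic_of_forall_asymptoticPair fun x y => hf.asymptoticPair_of_proximalPair,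
    ⟨wanderingInterval, exists_wanderingInterval_eq_Icc, pairwise_disjoint_wanderingInterval,
      image_doublingMap_wanderingInterval⟩⟩
  · exact hf.omegaSet_eq_cantorUI (hf.isSolenoidal_of_mem_cantorUI zero_mem_cantorSet)
  · exact fun x hx => (hf.finite_omegaSet_or_omegaSet_eq_cantorUI x).resolve_left hx
  · exact fun x hx => hf.cantorUI_subset_closure_orbit hx
end
end

section
/- Let k ∈ ℕ, n_k ∈ {0,1}^k, and η = α ∘ τ_{n_k}: Σ → Σ. Then the constant sequence 0̄ is a periodic point of η with period 2^k, and the η-orbit of 0̄ intersects the cylinder Σ_{n_k} in exactly one point, namely the sequence n_k0̄ (the block n_k followed by all zeros). -/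
open Filter Topology

noncomputable section

/-- The shift space `Σ = {0,1}^ℕ` of infinite binary sequences (with `false = 0`,
`true = 1`), carrying the product topology. -/
abbrev Sigma2 : Type := ℕ → Bool

/-- For a block `w ∈ {0,1}^k`, the map `τ_w : Σ → Σ`: identity on sequences not beginning
with `w`; on sequences beginning with `w` it keeps the first `k` symbols and swaps every
later symbol. -/
def tauMap (k : ℕ) (w : Fin k → Bool) (x : Sigma2) : Sigma2 :=
  if ∀ i : Fin k, x i = w i then (fun i => if i < k then x i else !(x i)) else x

/-- The adding machine (binary odometer) `α : Σ → Σ`, adding `1000…` coordinatewise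
mod 2 with carry to the right. -/
def addingMachine (x : Sigma2) : Sigma2 :=
  fun i => if ∀ j < i, x j = true then !(x i) else x i

/-- The constant-zero sequence `0̄`. -/
def zeroSeq : Sigma2 := fun _ => false

/-- The block `w` followed by all zeros. -/
def blockExt (k : ℕ) (w : Fin k → Bool) : Sigma2 :=
  fun i => if h : i < k then w ⟨i, h⟩ else false

/-- The cylinder `Σ_w` of sequences beginning with the block `w ∈ {0,1}^k`. -/
def cylinder (k : ℕ) (w : Fin k → Bool) : Set Sigma2 :=
  {x | ∀ i : Fin k, x i = w i}

/-!
Read a binary sequence as a 2-adic integer, least significant digit first. Then `α` adds `1`, and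
`τ_w` moves the integer `m` with digits `w0̄` to the integer `m - 2 ^ k`, whose digits are `w`
followed by all ones. Hence the orbit of `0̄` runs through `0, 1, …, m`, jumps to
`m + 1 - 2 ^ k, …, -1`, and returns to `0`. The first `k` digits of an integer determine its residue
modulo `2 ^ k`, and the `n`-th integer on this path is congruent to `n`, so the path visits each
residue class exactly once.
-/

variable {k : ℕ} {w : Fin k → Bool}

theorem bit_modEq_bit_iff (c d : Bool) (a b : ℤ) :
    Int.bit c a ≡ Int.bit d b [ZMOD 2 ^ (k + 1)] ↔ c = d ∧ a ≡ b [ZMOD 2 ^ k] := by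
  have two_dvd : (2 : ℤ) ∣ 2 ^ (k + 1) := dvd_pow_self 2 k.succ_ne_zero
  constructor
  · intro h
    have hcd : c = d := by
      have := h.of_dvd two_dvd
      cases c <;> cases d <;> simp [Int.bit_val, Int.ModEq] at this ⊢
    subst hcd
    rw [Int.bit_val, Int.bit_val, pow_succ'] at h
    exact ⟨rfl, (h.add_right_cancel' _).mul_left_cancel' two_ne_zero⟩
  · rintro ⟨rfl, h⟩
    rw [Int.bit_val, Int.bit_val, pow_succ']
    exact h.mul_left'.add_right _

theorem forall_lt_testBit_eq_iff_modEq (a b : ℤ) :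
    (∀ i < k, a.testBit i = b.testBit i) ↔ a ≡ b [ZMOD 2 ^ k] := by
  induction k generalizing a b with
  | zero => simp [Int.modEq_one]
  | succ k ih =>
    induction a using Int.bitCasesOn with | _ c a
    induction b using Int.bitCasesOn with | _ d b
    simp only [Nat.forall_lt_succ_left, Int.testBit_bit_zero, Int.testBit_bit_succ, ih,
      bit_modEq_bit_iff]

theorem testBit_natCast_sub_two_pow {m : ℕ} (hm : m < 2 ^ k) (i : ℕ) :
    ((m : ℤ) - 2 ^ k).testBit i = if i < k then m.testBit i else true := by
  have sub_eq_negSucc : (m : ℤ) - 2 ^ k = Int.negSucc (2 ^ k - (m + 1)) := by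
    rw [Int.negSucc_eq]
    push_cast [Nat.cast_sub (Nat.succ_le_of_lt hm)]
    ring
  rw [sub_eq_negSucc, Int.testBit, Nat.testBit_two_pow_sub_succ hm]
  by_cases hi : i < k <;> simp [hi]

/-- The two's complement digits of an integer, least significant first: the inclusion of `ℤ` in
`Sigma2`, seen as the 2-adic integers. -/
def binaryDigits (z : ℤ) : Sigma2 := z.testBit

theorem binaryDigits_natCast (m : ℕ) : binaryDigits m = m.testBit :=
  rfl

theorem binaryDigits_zero : binaryDigits 0 = zeroSeq :=
  funext Nat.zero_testBit

theorem binaryDigits_ofBits (w : Fin k → Bool) : binaryDigits (Nat.ofBits w) = blockExt k w :=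
  funext fun _ => Nat.testBit_ofBits w

theorem binaryDigits_mem_cylinder_iff {z : ℤ} :
    binaryDigits z ∈ cylinder k w ↔ z ≡ Nat.ofBits w [ZMOD 2 ^ k] := by
  rw [← forall_lt_testBit_eq_iff_modEq, cylinder, Set.mem_ofPred_eq, Fin.forall_iff]
  refine forall₂_congr fun i hi => ?_
  rw [← Nat.testBit_ofBits_lt w i hi]
  rfl

theorem addingMachine_apply_succ (x : Sigma2) (i : ℕ) :
    addingMachine x (i + 1) =
      if x 0 = true then addingMachine (fun j => x (j + 1)) i else x (i + 1) := by
  have carry_iff : (∀ j < i + 1, x j = true) ↔ x 0 = true ∧ ∀ j < i, x (j + 1) = true :=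
    Nat.forall_lt_succ_left
  by_cases h : x 0 = true <;> simp only [addingMachine, carry_iff, h, true_and, false_and, if_true,
    if_false, Bool.false_eq_true]

theorem bit_false_add_one (q : ℤ) : Int.bit false q + 1 = Int.bit true q := by
  simp [Int.bit_val]

theorem bit_true_add_one (q : ℤ) : Int.bit true q + 1 = Int.bit false (q + 1) := by
  simp only [Int.bit_val, cond_true, cond_false]
  ring

theorem addingMachine_binaryDigits (z : ℤ) :
    addingMachine (binaryDigits z) = binaryDigits (z + 1) := by
  funext i
  induction i generalizing z with
  | zero =>
    induction z using Int.bitCasesOn with | _ b q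
    cases b <;>
      simp [addingMachine, binaryDigits, bit_false_add_one, bit_true_add_one, Int.testBit_bit_zero]
  | succ i ih =>
    induction z using Int.bitCasesOn with | _ b q
    have tail_eq : (fun j => binaryDigits (Int.bit b q) (j + 1)) = binaryDigits q :=
      funext fun j => Int.testBit_bit_succ j b q
    rw [addingMachine_apply_succ, tail_eq, ih]
    cases b <;> simp [binaryDigits, bit_false_add_one, bit_true_add_one, Int.testBit_bit_zero,
      Int.testBit_bit_succ]

theorem tauMap_of_notMem_cylinder {x : Sigma2} (hx : x ∉ cylinder k w) : tauMap k w x = x :=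
  if_neg hx

theorem tauMap_binaryDigits_ofBits (w : Fin k → Bool) :
    tauMap k w (binaryDigits (Nat.ofBits w)) = binaryDigits (Nat.ofBits w - 2 ^ k) := by
  refine (if_pos (binaryDigits_mem_cylinder_iff.mpr rfl)).trans (funext fun i => ?_)
  rw [binaryDigits_natCast, binaryDigits, testBit_natCast_sub_two_pow (Nat.ofBits_lt_two_pow w)]
  split_ifs with hi
  · rfl
  · rw [Nat.testBit_ofBits_ge w i (not_lt.mp hi), Bool.not_false]

/-- The integer whose digits are the `n`-th point of the orbit of `0̄` under `α ∘ τ_w`, for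
`n ≤ 2 ^ k`. -/
def orbitInt (w : Fin k → Bool) (n : ℕ) : ℤ :=
  if n ≤ Nat.ofBits w then n else n - 2 ^ k

theorem orbitInt_modEq (w : Fin k → Bool) (n : ℕ) : orbitInt w n ≡ n [ZMOD 2 ^ k] := by
  unfold orbitInt
  split_ifs
  · rfl
  · exact Int.modEq_iff_dvd.mpr (by simp)

theorem orbitInt_ofBits (w : Fin k → Bool) : orbitInt w (Nat.ofBits w) = Nat.ofBits w :=
  if_pos le_rfl

theorem orbitInt_two_pow (w : Fin k → Bool) : orbitInt w (2 ^ k) = 0 := by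
  simp [orbitInt, Nat.ofBits_lt_two_pow w]

theorem binaryDigits_orbitInt_mem_cylinder_iff {n : ℕ} (hn : n < 2 ^ k) :
    binaryDigits (orbitInt w n) ∈ cylinder k w ↔ n = Nat.ofBits w := by
  rw [binaryDigits_mem_cylinder_iff]
  constructor
  · intro h
    have natCast_modEq : (n : ℤ) ≡ Nat.ofBits w [ZMOD 2 ^ k] := (orbitInt_modEq w n).symm.trans h
    exact Nat.ModEq.eq_of_lt_of_lt (Int.natCast_modEq_iff.mp (by exact_mod_cast natCast_modEq)) hn
      (Nat.ofBits_lt_two_pow w)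
  · rintro rfl
    exact orbitInt_modEq w _

theorem addingMachine_tauMap_binaryDigits_orbitInt {n : ℕ} (hn : n < 2 ^ k) :
    (addingMachine ∘ tauMap k w) (binaryDigits (orbitInt w n)) =
      binaryDigits (orbitInt w (n + 1)) := by
  rw [Function.comp_apply]
  by_cases hnw : n = Nat.ofBits w
  · subst hnw
    rw [orbitInt_ofBits, tauMap_binaryDigits_ofBits, addingMachine_binaryDigits]
    congr 1
    rw [orbitInt, if_neg (Nat.not_succ_le_self _)]
    push_cast
    ring
  · have le_iff : n + 1 ≤ Nat.ofBits w ↔ n ≤ Nat.ofBits w := by omega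
    rw [tauMap_of_notMem_cylinder (mt (binaryDigits_orbitInt_mem_cylinder_iff hn).mp hnw),
      addingMachine_binaryDigits]
    congr 1
    simp only [orbitInt, le_iff]
    split_ifs <;> push_cast <;> ring

theorem iterate_zeroSeq_eq_binaryDigits_orbitInt {n : ℕ} (hn : n ≤ 2 ^ k) :
    (addingMachine ∘ tauMap k w)^[n] zeroSeq = binaryDigits (orbitInt w n) := by
  induction n with
  | zero => simp [orbitInt, binaryDigits_zero]
  | succ n ih =>
    rw [Function.iterate_succ_apply', ih (Nat.le_of_succ_le hn),
      addingMachine_tauMap_binaryDigits_orbitInt hn]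

theorem isPeriodicPt_zeroSeq (w : Fin k → Bool) :
    Function.IsPeriodicPt (addingMachine ∘ tauMap k w) (2 ^ k) zeroSeq := by
  rw [Function.IsPeriodicPt, Function.IsFixedPt, iterate_zeroSeq_eq_binaryDigits_orbitInt le_rfl,
    orbitInt_two_pow, binaryDigits_zero]

theorem minimalPeriod_zeroSeq (w : Fin k → Bool) :
    Function.minimalPeriod (addingMachine ∘ tauMap k w) zeroSeq = 2 ^ k := by
  set p := Function.minimalPeriod (addingMachine ∘ tauMap k w) zeroSeq
  have period_le : p ≤ 2 ^ k := (isPeriodicPt_zeroSeq w).minimalPeriod_le (Nat.two_pow_pos k)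
  have digits_eq : binaryDigits (orbitInt w p) = binaryDigits 0 := by
    rw [← iterate_zeroSeq_eq_binaryDigits_orbitInt period_le, binaryDigits_zero,
      Function.iterate_minimalPeriod]
  have modEq_zero : (p : ℤ) ≡ 0 [ZMOD 2 ^ k] :=
    (orbitInt_modEq w p).symm.trans <|
      (forall_lt_testBit_eq_iff_modEq _ _).mp fun i _ => congrFun digits_eq i
  exact Nat.dvd_antisymm (isPeriodicPt_zeroSeq w).minimalPeriod_dvd
    (by exact_mod_cast Int.modEq_zero_iff_dvd.mp modEq_zero)

theorem iterate_zeroSeq_mem_cylinder_iff {n : ℕ} (hn : n < 2 ^ k) :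
    (addingMachine ∘ tauMap k w)^[n] zeroSeq ∈ cylinder k w ↔ n = Nat.ofBits w := by
  rw [iterate_zeroSeq_eq_binaryDigits_orbitInt hn.le, binaryDigits_orbitInt_mem_cylinder_iff hn]

theorem iterate_ofBits_zeroSeq (w : Fin k → Bool) :
    (addingMachine ∘ tauMap k w)^[Nat.ofBits w] zeroSeq = blockExt k w := by
  rw [iterate_zeroSeq_eq_binaryDigits_orbitInt (Nat.ofBits_lt_two_pow w).le, orbitInt_ofBits,
    binaryDigits_ofBits]

/-- For `η = α ∘ τ_w`, the constant-zero sequence is periodic with (least) period `2 ^ k`,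
and its `η`-orbit meets the cylinder `Σ_w` in exactly the single point `w0̄`. -/
theorem zeroSeq_periodic_orbit_meets_cylinder (k : ℕ) (w : Fin k → Bool) :
    Function.IsPeriodicPt (addingMachine ∘ tauMap k w) (2 ^ k) zeroSeq ∧
    Function.minimalPeriod (addingMachine ∘ tauMap k w) zeroSeq = 2 ^ k ∧
    (Set.range fun n => (addingMachine ∘ tauMap k w)^[n] zeroSeq) ∩ cylinder k w
      = {blockExt k w} := by
  refine ⟨isPeriodicPt_zeroSeq w, minimalPeriod_zeroSeq w, Set.Subset.antisymm ?_ ?_⟩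
  · rintro _ ⟨⟨n, rfl⟩, hn⟩
    have reduce := (isPeriodicPt_zeroSeq w).iterate_mod_apply n
    have residue_lt : n % 2 ^ k < 2 ^ k := Nat.mod_lt n (Nat.two_pow_pos k)
    have residue_eq : n % 2 ^ k = Nat.ofBits w :=
      (iterate_zeroSeq_mem_cylinder_iff residue_lt).mp (reduce ▸ hn)
    exact reduce.symm.trans (residue_eq ▸ iterate_ofBits_zeroSeq w)
  · rw [Set.singleton_subset_iff, ← iterate_ofBits_zeroSeq w]
    exact ⟨⟨Nat.ofBits w, rfl⟩,
      (iterate_zeroSeq_mem_cylinder_iff (Nat.ofBits_lt_two_pow w)).mpr rfl⟩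
end
end

section
/- Let k ∈ ℕ, n_k ∈ {0,1}^k, η = α ∘ τ_{n_k}: Σ → Σ, and let B ⊆ Σ be the set of sequences that are eventually constant (ending in all 0's or in all 1's). Then every point of B is periodic under η; moreover, each point of B either has period 2^k and lies on the η-orbit of the constant-zero sequence 0̄, or has period m·2^k for some positive integer m. -/
open Filter Topology

noncomputable section

/-- The set `B ⊆ Σ` of eventually constant sequences. -/
def eventuallyConst : Set Sigma2 :=
  {x | ∃ N : ℕ, (∀ n ≥ N, x n = false) ∨ (∀ n ≥ N, x n = true)}

/-!
Read sequences as 2-adic integers. For the empty block, `η` is negation `x ↦ -x`, because flipping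
every symbol is `x ↦ -1 - x` and `α` adds `1`; it is an involution whose only fixed point is `0̄`.
For a block `w` of length `k + 1`, `η` flips the first symbol, so `0x` returns after two steps to
the sequences beginning with `0`. Exactly one of these steps starts from the symbol `w₀` and applies
the shorter `τ` to the tail, and only the second one then carries into the tail, so the return map
acts on `x` as the `η` of the block `w` without its first symbol. Hence each symbol of the block
doubles the least period, which on all of `Σ` is `2 ^ k` on the orbit of `0̄` and `2 * 2 ^ k`
elsewhere.
-/

open Function

theorem minimalPeriod_eq_mul_of_semiconj_iterate {α β : Type*} {f : α → α} {f' : β → β}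
    {g : β → α} {n : ℕ} {b : β} (h : Semiconj g f' f^[n]) (hg : Injective g)
    (hn : n ∣ minimalPeriod f (g b)) : minimalPeriod f (g b) = n * minimalPeriod f' b := by
  have iterate_mul_apply (m : ℕ) : f^[n * m] (g b) = g (f'^[m] b) := by
    rw [iterate_mul, (h.iterate_right m).eq]
  apply Nat.dvd_antisymm
  · apply IsPeriodicPt.minimalPeriod_dvd
    rw [IsPeriodicPt, IsFixedPt, iterate_mul_apply, iterate_minimalPeriod]
  · obtain ⟨m, hm⟩ := hn
    rw [hm]
    refine mul_dvd_mul_left n (IsPeriodicPt.minimalPeriod_dvd (hg ?_))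
    rw [← iterate_mul_apply, ← hm, iterate_minimalPeriod]

namespace Sigma2

/-- The sequence `bx` with first symbol `b` and tail `x`; it serves to peel blocks one symbol at a
time. -/
def cons (b : Bool) (x : Sigma2) : Sigma2
  | 0 => b
  | i + 1 => x i

@[simp]
theorem cons_zero (b : Bool) (x : Sigma2) : cons b x 0 = b := rfl

@[simp]
theorem cons_succ (b : Bool) (x : Sigma2) (i : ℕ) : cons b x (i + 1) = x i := rfl

theorem cons_injective (b : Bool) : Injective (cons b) := fun _ _ h =>
  funext fun i => congrFun h (i + 1)

theorem exists_eq_cons (x : Sigma2) : ∃ b y, x = cons b y :=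
  ⟨x 0, fun i => x (i + 1), by ext (_ | i) <;> rfl⟩

end Sigma2

open Sigma2

theorem cons_false_zeroSeq : cons false zeroSeq = zeroSeq := by
  ext (_ | i) <;> rfl

theorem addingMachine_apply_zero (x : Sigma2) : addingMachine x 0 = !x 0 := by
  simp [addingMachine]

theorem addingMachine_cons_false (x : Sigma2) :
    addingMachine (cons false x) = cons true x := by
  ext (_ | i) <;> simp [addingMachine, Nat.forall_lt_succ_left, -Order.lt_add_one_iff]

theorem addingMachine_cons_true (x : Sigma2) :
    addingMachine (cons true x) = cons false (addingMachine x) := by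
  ext (_ | i) <;> simp [addingMachine, Nat.forall_lt_succ_left, -Order.lt_add_one_iff]

theorem tauMap_involutive (k : ℕ) (w : Fin k → Bool) : Involutive (tauMap k w) := by
  intro x
  by_cases h : ∀ i : Fin k, x i = w i
  · ext i
    by_cases hi : i < k <;> simp [tauMap, h, hi]
  · simp [tauMap, h]

theorem tauMap_cons {k : ℕ} (w : Fin (k + 1) → Bool) (b : Bool) (x : Sigma2) :
    tauMap (k + 1) w (cons b x) = cons b (if b = w 0 then tauMap k (Fin.tail w) x else x) := by
  by_cases hb : b = w 0 <;> by_cases hx : ∀ i : Fin k, x i = w i.succ <;>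
    ext (_ | i) <;> simp [tauMap, Fin.forall_fin_succ, Fin.tail, hb, hx]

/-- The map `η = α ∘ τ_w`, whose periodic points are studied. -/
def twistedOdometer (k : ℕ) (w : Fin k → Bool) : Sigma2 → Sigma2 :=
  addingMachine ∘ tauMap k w

section EmptyBlock

variable (w : Fin 0 → Bool)

-- In the 2-adic integers, `-x` agrees with `x` up to and including the first symbol `1`.
theorem twistedOdometer_zero_apply (x : Sigma2) (i : ℕ) :
    twistedOdometer 0 w x i = if ∀ j < i, x j = false then x i else !x i := by
  simp [twistedOdometer, addingMachine, tauMap]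

theorem twistedOdometer_zero_involutive : Involutive (twistedOdometer 0 w) := by
  intro x
  have prefix_eq_zero_iff (i : ℕ) :
      (∀ j < i, twistedOdometer 0 w x j = false) ↔ ∀ j < i, x j = false := by
    induction i with
    | zero => simp
    | succ i ih =>
      simp only [Nat.forall_lt_succ_right, ih]
      refine and_congr_right fun h => ?_
      rw [twistedOdometer_zero_apply, if_pos h]
  ext i
  rw [twistedOdometer_zero_apply]
  simp only [prefix_eq_zero_iff]
  rw [twistedOdometer_zero_apply]
  split_ifs <;> simp

theorem isFixedPt_twistedOdometer_zero_iff {x : Sigma2} :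
    IsFixedPt (twistedOdometer 0 w) x ↔ x = zeroSeq := by
  constructor
  · intro h
    ext i
    have hi := congrFun h (i + 1)
    rw [twistedOdometer_zero_apply] at hi
    have prefix_eq_zero : ∀ j < i + 1, x j = false := by
      by_contra hne
      rw [if_neg hne] at hi
      exact Bool.not_ne_self _ hi
    exact prefix_eq_zero i i.lt_succ_self
  · rintro rfl
    ext i
    simp [twistedOdometer_zero_apply, zeroSeq]

end EmptyBlock

section SuccBlock

variable {k : ℕ} (w : Fin (k + 1) → Bool)

theorem twistedOdometer_cons (b : Bool) (x : Sigma2) :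
    twistedOdometer (k + 1) w (cons b x) =
      addingMachine (cons b (if b = w 0 then tauMap k (Fin.tail w) x else x)) := by
  rw [twistedOdometer, comp_apply, tauMap_cons]

theorem twistedOdometer_succ_apply_zero (x : Sigma2) :
    twistedOdometer (k + 1) w x 0 = !x 0 := by
  obtain ⟨b, y, rfl⟩ := exists_eq_cons x
  rw [twistedOdometer_cons, addingMachine_apply_zero, cons_zero, cons_zero]

theorem semiconj_cons_false_twistedOdometer :
    Semiconj (cons false) (twistedOdometer k (Fin.tail w)) (twistedOdometer (k + 1) w)^[2] := by
  intro x
  change cons false (addingMachine (tauMap k (Fin.tail w) x)) =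
    twistedOdometer (k + 1) w (twistedOdometer (k + 1) w (cons false x))
  cases hw : w 0 <;>
    simp [twistedOdometer_cons, addingMachine_cons_false, addingMachine_cons_true, hw]

theorem exists_iterate_twistedOdometer_cons_false_eq (x : Sigma2) :
    ∃ n y, (twistedOdometer (k + 1) w)^[n] (cons false y) = x := by
  obtain ⟨b, y, rfl⟩ := exists_eq_cons x
  cases b with
  | false => exact ⟨0, y, rfl⟩
  | true =>
    refine ⟨1, if false = w 0 then tauMap k (Fin.tail w) y else y, ?_⟩
    rw [iterate_one, twistedOdometer_cons, addingMachine_cons_false]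
    split_ifs
    · rw [tauMap_involutive]
    · rfl

theorem two_dvd_minimalPeriod_twistedOdometer (x : Sigma2) :
    2 ∣ minimalPeriod (twistedOdometer (k + 1) w) x := by
  have minimalPeriod_not : minimalPeriod not (x 0) = 2 :=
    minimalPeriod_eq_prime (Bool.involutive_not _) (Bool.not_ne_self _)
  have semiconj_head : Semiconj (fun y : Sigma2 => y 0) (twistedOdometer (k + 1) w) not :=
    twistedOdometer_succ_apply_zero w
  exact minimalPeriod_not ▸ ((isPeriodicPt_minimalPeriod _ x).map semiconj_head).minimalPeriod_dvd

theorem minimalPeriod_twistedOdometer_cons_false (x : Sigma2) :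
    minimalPeriod (twistedOdometer (k + 1) w) (cons false x) =
      2 * minimalPeriod (twistedOdometer k (Fin.tail w)) x :=
  minimalPeriod_eq_mul_of_semiconj_iterate (semiconj_cons_false_twistedOdometer w)
    (cons_injective false) (two_dvd_minimalPeriod_twistedOdometer w _)

theorem iterate_twistedOdometer_zeroSeq (n : ℕ) :
    (twistedOdometer (k + 1) w)^[2 * n] zeroSeq =
      cons false ((twistedOdometer k (Fin.tail w))^[n] zeroSeq) := by
  rw [((semiconj_cons_false_twistedOdometer w).iterate_right n).eq, cons_false_zeroSeq, iterate_mul]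

end SuccBlock

theorem eventuallyConst_periodic_general (k : ℕ) (w : Fin k → Bool) (x : Sigma2) :
    x ∈ periodicPts (twistedOdometer k w) ∧
      ((minimalPeriod (twistedOdometer k w) x = 2 ^ k ∧
          ∃ n : ℕ, (twistedOdometer k w)^[n] zeroSeq = x) ∨
        minimalPeriod (twistedOdometer k w) x = 2 * 2 ^ k) := by
  induction k generalizing x with
  | zero =>
    have involutive := twistedOdometer_zero_involutive w
    refine ⟨mk_mem_periodicPts two_pos (involutive x), ?_⟩
    by_cases hx : x = zeroSeq
    · have isFixedPt := (isFixedPt_twistedOdometer_zero_iff w).2 hx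
      exact .inl ⟨minimalPeriod_eq_one_iff_isFixedPt.2 isFixedPt, 0, hx.symm⟩
    · have not_isFixedPt := mt (isFixedPt_twistedOdometer_zero_iff w).1 hx
      exact .inr (minimalPeriod_eq_prime (p := 2) (involutive x) not_isFixedPt)
  | succ k ih =>
    obtain ⟨n, y, rfl⟩ := exists_iterate_twistedOdometer_cons_false_eq w x
    obtain ⟨hy, period_y⟩ := ih (Fin.tail w) y
    have minimalPeriod_cons := minimalPeriod_twistedOdometer_cons_false w y
    have cons_mem : cons false y ∈ periodicPts (twistedOdometer (k + 1) w) := by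
      rw [← minimalPeriod_pos_iff_mem_periodicPts, minimalPeriod_cons]
      exact mul_pos two_pos (minimalPeriod_pos_of_mem_periodicPts hy)
    refine ⟨(bijOn_periodicPts _).mapsTo.iterate n cons_mem, ?_⟩
    rw [minimalPeriod_apply_iterate cons_mem, minimalPeriod_cons, pow_succ']
    refine period_y.imp ?_ fun h => by rw [h]
    rintro ⟨h, m, hm⟩
    exact ⟨by rw [h], n + 2 * m, by rw [iterate_add_apply, iterate_twistedOdometer_zeroSeq, hm]⟩

/-- For `η = α ∘ τ_w`, every eventually constant sequence is periodic under `η`; moreover it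
either has least period `2 ^ k` and lies on the `η`-orbit of `0̄`, or has least period
`m * 2 ^ k` for some positive integer `m`. -/
theorem eventuallyConst_periodic (k : ℕ) (w : Fin k → Bool) :
    ∀ x ∈ eventuallyConst,
      x ∈ Function.periodicPts (addingMachine ∘ tauMap k w) ∧
      ((Function.minimalPeriod (addingMachine ∘ tauMap k w) x = 2 ^ k ∧
          ∃ n : ℕ, (addingMachine ∘ tauMap k w)^[n] zeroSeq = x) ∨
        (∃ m : ℕ, 0 < m ∧
          Function.minimalPeriod (addingMachine ∘ tauMap k w) x = m * 2 ^ k)) :=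
  fun x _ => (eventuallyConst_periodic_general k w x).imp_right
    (Or.imp_right fun h => ⟨2, two_pos, h⟩)
end
end
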